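/- Let $K$ be a field and $G$ the graph formed by joining two cycles $C_n$ and $C_m$ ($n, m \geq 3$) at a single common vertex, with $N = |V(G)| = n + m - 1$. Then $\operatorname{ara}\, I(G) = \operatorname{pd}_R(R/I(G))$, and this common value equals: $\frac{2N+1}{3}$ if $N \equiv 1 \pmod 3$; $\frac{2N}{3}$ if $N \equiv 0 \pmod 3$; and if $N \equiv 2 \pmod 3$, it equals $\frac{2N+2}{3}$ when $m \equiv 0 \pmod 3$ (equivalently when both $n$ and $m$ are divisible by 3), and $\frac{2N-1}{3}$ otherwise. -/

import Mathlib

open MvPolynomial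

/-- Arithmetical rank: the least number of elements of `R` generating `I` up to radical. -/
noncomputable def araRank {R : Type} [CommRing R] (I : Ideal R) : ℕ :=
  sInf {s : ℕ | ∃ f : Fin s → R, (Ideal.span (Set.range f)).radical = I.radical}


/-- Projective dimension of an `R`-module `M`, characterized via vanishing of the
`Ext` functors: the least `d` such that `Ext^i(M, N) = 0` for all `i > d` and all `N`. -/
noncomputable def projDim (R : Type) [CommRing R] (M : Type) [AddCommGroup M]
    [Module R M] : ℕ∞ :=
  sInf {d : ℕ∞ | ∀ i : ℕ, d < i → ∀ N : ModuleCat R,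
    Subsingleton (((Ext R (ModuleCat R) i).obj (Opposite.op (ModuleCat.of R M))).obj N)}

/-- The edge ideal of the graph consisting of two cycles `Cₙ` and `C_m` sharing exactly
one vertex.  The `N = n + m - 1` vertices are indexed by `ZMod N`: the cycle `Cₙ` has
vertices `0, 1, …, n-1` and the cycle `C_m` has vertices `0, n, n+1, …, n+m-2`, the
common vertex being `0`. -/
noncomputable def vertexJoinIdeal (K : Type) [Field K] (n m : ℕ) :
    Ideal (MvPolynomial (ZMod (n + m - 1)) K) :=
  Ideal.span
    (((fun j : ℕ => (X ((j : ZMod (n + m - 1))) * X (((j + 1 : ℕ) : ZMod (n + m - 1))) :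
        MvPolynomial (ZMod (n + m - 1)) K)) '' Set.Iio (n - 1))
      ∪ {X (((n - 1 : ℕ) : ZMod (n + m - 1))) * X 0}
      ∪ {X 0 * X (((n : ℕ) : ZMod (n + m - 1)))}
      ∪ ((fun j : ℕ => (X ((j : ZMod (n + m - 1))) * X (((j + 1 : ℕ) : ZMod (n + m - 1))) :
          MvPolynomial (ZMod (n + m - 1)) K)) '' Set.Ico n (n + m - 2))
      ∪ {X (((n + m - 2 : ℕ) : ZMod (n + m - 1))) * X 0})

/-!
Write `p = ⌊2n/3⌋ + ⌊2m/3⌋ + ε`, where `ε = 1` if `n ≡ m ≡ 1 (mod 3)` and `ε = 0` otherwise.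

Upper bounds. The projective dimension is at most `p` by the exact sequences
`0 → R/(I : x) → R/I → R/(I, x) → 0`, with `x` chosen so that both outer ideals are simpler ideals
of paths and variables. For the arithmetical rank, `p` generators up to radical are written down
explicitly; the saving over one generator per edge is the Schmitt–Vogel trick, that a prime
containing `fg` and `f + g` contains `f` and `g`.

Lower bounds. Setting the variables outside a suitable set equal to `1` turns `I` into the sum of
an ideal of variables and the edge ideal of a cycle of length `≡ 1 (mod 3)`. Mayer–Vietoris removes
three vertices of that cycle at a time, until only an ideal generated by a regular sequence of
variables is left. Run with `Ext` into the module supported at a point this bounds the projective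
dimension; run with local cohomology, which vanishes beyond the number of generators up to radical,
it bounds the arithmetical rank.
-/

open CategoryTheory

universe u

section PowTorsion

variable {R : Type u} [CommRing R] {M N : Type*} [AddCommGroup M] [Module R M]
  [AddCommGroup N] [Module R N] {J J' : Ideal R}

variable (M) in
/-- The submodule `Γ_J(M)` of the elements of `M` that are killed by a power of every element
of `J`. -/
def powTorsion (J : Ideal R) : Submodule R M where
  carrier := {x | J ≤ (Ideal.torsionOf R M x).radical}
  zero_mem' := by simp [Ideal.torsionOf_zero, Ideal.radical_top]
  add_mem' {x y} hx hy r hr := by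
    obtain ⟨k, hk⟩ := hx hr
    obtain ⟨l, hl⟩ := hy hr
    rw [Ideal.mem_torsionOf_iff] at hk hl
    refine ⟨k + l, ?_⟩
    rw [Ideal.mem_torsionOf_iff, smul_add, pow_add, mul_smul _ _ y, hl, mul_comm, mul_smul, hk,
      smul_zero, smul_zero, add_zero]
  smul_mem' c x hx r hr := by
    obtain ⟨k, hk⟩ := hx hr
    rw [Ideal.mem_torsionOf_iff] at hk
    refine ⟨k, ?_⟩
    rw [Ideal.mem_torsionOf_iff, smul_comm, hk, smul_zero]

theorem mem_powTorsion {x : M} : x ∈ powTorsion M J ↔ J ≤ (Ideal.torsionOf R M x).radical :=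
  Iff.rfl

theorem mem_powTorsion_of_torsionOf_le {x : M} {y : N} (hx : x ∈ powTorsion M J)
    (h : Ideal.torsionOf R M x ≤ Ideal.torsionOf R N y) : y ∈ powTorsion N J :=
  (mem_powTorsion.1 hx).trans (Ideal.radical_mono h)

theorem map_mem_powTorsion (f : M →ₗ[R] N) {x : M} (hx : x ∈ powTorsion M J) :
    f x ∈ powTorsion N J :=
  mem_powTorsion_of_torsionOf_le hx fun r hr => by
    rw [Ideal.mem_torsionOf_iff] at hr ⊢
    rw [← map_smul, hr, map_zero]

theorem powTorsion_anti (h : J' ≤ J.radical) : powTorsion M J ≤ powTorsion M J' :=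
  fun _ hx => h.trans (Ideal.radical_le_radical_iff.2 hx)

theorem powTorsion_bot : powTorsion M (⊥ : Ideal R) = ⊤ :=
  eq_top_iff.2 fun _ _ => mem_powTorsion.2 bot_le

theorem powTorsion_sup : powTorsion M (J ⊔ J') = powTorsion M J ⊓ powTorsion M J' :=
  Submodule.ext fun _ => sup_le_iff (α := Ideal R)

theorem mem_powTorsion_span_singleton {f : R} {x : M} :
    x ∈ powTorsion M (Ideal.span {f}) ↔ ∃ k : ℕ, f ^ k • x = 0 := by
  rw [mem_powTorsion, Ideal.span_singleton_le_iff_mem]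
  rfl

theorem le_torsionOf_map_one (f : R ⧸ J →ₗ[R] M) : J ≤ Ideal.torsionOf R M (f 1) := by
  intro r hr
  rw [Ideal.mem_torsionOf_iff, ← map_smul, Algebra.smul_def, mul_one]
  exact (congrArg f (Ideal.Quotient.eq_zero_iff_mem.2 hr)).trans (map_zero f)

end PowTorsion

section Injective

variable {R : Type u} [CommRing R] {M : Type u} [AddCommGroup M] [Module R M]

theorem exists_comp_eq_of_ker_le [Module.Injective R M] {X Y : Type u} [AddCommGroup X]
    [Module R X] [AddCommGroup Y] [Module R Y] (g : X →ₗ[R] Y) (h : X →ₗ[R] M)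
    (hgh : LinearMap.ker g ≤ LinearMap.ker h) : ∃ H : Y →ₗ[R] M, ∀ x, H (g x) = h x := by
  obtain ⟨H, hH⟩ := Module.Injective.out (Q := M) ((LinearMap.ker g).liftQ g le_rfl)
    (LinearMap.ker_eq_bot.1 (Submodule.ker_liftQ_eq_bot _ _ _ le_rfl))
    ((LinearMap.ker g).liftQ h hgh)
  exact ⟨H, fun x => by simpa using hH (Submodule.Quotient.mk x)⟩

variable [IsNoetherianRing R]

theorem exists_pow_inf_pow_le_inf_pow (A B : Ideal R) (t : ℕ) :
    ∃ u : ℕ, A ^ u ⊓ B ^ u ≤ (A ⊓ B) ^ t := by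
  obtain ⟨k, hk⟩ := Ideal.exists_pow_inf_eq_pow_smul A (B ^ t)
  refine ⟨k + t, ?_⟩
  have hArtinRees : A ^ (k + t) ⊓ B ^ t = A ^ t • (A ^ k ⊓ B ^ t) := by
    simpa using hk (k + t) (Nat.le_add_right k t)
  calc A ^ (k + t) ⊓ B ^ (k + t) ≤ A ^ (k + t) ⊓ B ^ t :=
        inf_le_inf_left _ (Ideal.pow_le_pow_right (Nat.le_add_left t k))
    _ ≤ A ^ t * B ^ t := hArtinRees.le.trans (Ideal.mul_mono_right inf_le_right)
    _ = (A * B) ^ t := (mul_pow A B t).symm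
    _ ≤ (A ⊓ B) ^ t := Ideal.pow_right_mono Ideal.mul_le_inf t

theorem exists_forall_mem_torsionOf_pow_smul (f : R) (z : M) :
    ∃ l : ℕ, ∀ k, Ideal.torsionOf R M (f ^ (l + k) • z) = Ideal.torsionOf R M (f ^ l • z) := by
  let c : ℕ →o Ideal R :=
    { toFun l := Ideal.torsionOf R M (f ^ l • z)
      monotone' := monotone_nat_of_le_succ fun l r hr => by
        rw [Ideal.mem_torsionOf_iff] at hr ⊢
        rw [pow_succ', mul_smul, smul_comm, hr, smul_zero] }
  obtain ⟨l, hl⟩ := monotone_stabilizes_iff_noetherian.2 ‹IsNoetherianRing R› c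
  exact ⟨l, fun k => (hl (l + k) (Nat.le_add_right l k)).symm⟩

variable [Module.Injective R M]

-- Injective modules are `f`-divisible up to `f`-power torsion.
theorem exists_pow_smul_sub_pow_smul_eq_zero (f : R) (k : ℕ) (z : M) :
    ∃ (w : M) (l : ℕ), Ideal.torsionOf R M z ≤ Ideal.torsionOf R M w ∧
      f ^ l • (z - f ^ k • w) = 0 := by
  obtain ⟨l, hl⟩ := exists_forall_mem_torsionOf_pow_smul f z
  let g : R →ₗ[R] R ⧸ Ideal.torsionOf R M z :=
    LinearMap.toSpanSingleton R _ (Ideal.Quotient.mk _ (f ^ (l + k)))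
  obtain ⟨H, hH⟩ := exists_comp_eq_of_ker_le g (LinearMap.toSpanSingleton R M (f ^ l • z))
    fun r hr => by
      have hr' : Ideal.Quotient.mk (Ideal.torsionOf R M z) (r * f ^ (l + k)) = 0 := hr
      change r ∈ Ideal.torsionOf R M (f ^ l • z)
      rw [← hl k, Ideal.mem_torsionOf_iff, ← mul_smul]
      exact Ideal.Quotient.eq_zero_iff_mem.1 hr'
  have hH_one : f ^ (l + k) • H 1 = f ^ l • z := by
    have := hH 1
    rw [LinearMap.toSpanSingleton_apply, LinearMap.toSpanSingleton_apply, one_smul,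
      one_smul] at this
    rw [← this, ← map_smul, Algebra.smul_def, mul_one]
    rfl
  refine ⟨H 1, l, le_torsionOf_map_one H, ?_⟩
  rw [smul_sub, ← mul_smul, ← pow_add, hH_one, sub_self]

-- A map `R → M` killing `A ^ u ⊓ B ^ u` extends along `R → R ⧸ A ^ u × R ⧸ B ^ u`.
theorem powTorsion_inf (A B : Ideal R) :
    powTorsion M (A ⊓ B) = powTorsion M A ⊔ powTorsion M B := by
  refine le_antisymm (fun y hy => ?_) (sup_le (powTorsion_anti (inf_le_left.trans Ideal.le_radical))
    (powTorsion_anti (inf_le_right.trans Ideal.le_radical)))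
  obtain ⟨t, ht⟩ :=
    Ideal.exists_pow_le_of_le_radical_of_fg hy (IsNoetherian.noetherian (A ⊓ B))
  obtain ⟨u, hu⟩ := exists_pow_inf_pow_le_inf_pow A B t
  obtain ⟨H, hH⟩ := exists_comp_eq_of_ker_le
    (LinearMap.prod (A ^ u : Submodule R R).mkQ (B ^ u : Submodule R R).mkQ)
    (LinearMap.toSpanSingleton R M y) (by
      rw [LinearMap.ker_prod, Submodule.ker_mkQ, Submodule.ker_mkQ]
      exact hu.trans ht)
  have map_one_mem (J : Ideal R) (f : R ⧸ J ^ u →ₗ[R] M) : f 1 ∈ powTorsion M J :=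
    fun r hr => ⟨u, le_torsionOf_map_one f (Ideal.pow_mem_pow hr u)⟩
  refine Submodule.mem_sup.2 ⟨_, map_one_mem A (H ∘ₗ LinearMap.inl R _ _), _,
    map_one_mem B (H ∘ₗ LinearMap.inr R _ _), ?_⟩
  simpa [← map_add] using hH 1

end Injective

section TorsionExact

variable {R : Type u} [CommRing R] {E : ℕ → Type u} [∀ i, AddCommGroup (E i)]
  [∀ i, Module R (E i)] (d : ∀ i, E i →ₗ[R] E (i + 1))

/-- Exactness of the `J`-power torsion of the complex `E` at `E (i + 1)`. When `E` is an injective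
resolution of `R`, this says that the local cohomology `H_J^{i+1}(R)` vanishes. -/
def TorsionExact (J : Ideal R) (i : ℕ) : Prop :=
  ∀ z ∈ powTorsion (E (i + 1)) J, d (i + 1) z = 0 → ∃ y ∈ powTorsion (E i) J, d i y = z

variable {d}

theorem TorsionExact.of_radical_eq {J J' : Ideal R} {i : ℕ} (h : TorsionExact d J i)
    (hJ : J.radical = J'.radical) : TorsionExact d J' i := fun z hz hdz =>
  have hJJ' : J ≤ J'.radical := Ideal.le_radical.trans hJ.le
  have hJ'J : J' ≤ J.radical := Ideal.le_radical.trans hJ.ge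
  have ⟨y, hy, hyz⟩ := h z (powTorsion_anti hJJ' hz) hdz
  ⟨y, powTorsion_anti hJ'J hy, hyz⟩

theorem torsionExact_bot (hd : ∀ i, Function.Exact (d i) (d (i + 1))) (i : ℕ) :
    TorsionExact d ⊥ i := fun z _ hdz =>
  have ⟨y, hy⟩ := (hd i z).1 hdz
  ⟨y, by simp only [powTorsion_bot, Submodule.mem_top], hy⟩

variable [IsNoetherianRing R] [∀ i, Module.Injective R (E i)]

theorem TorsionExact.sup_span_singleton (hd : ∀ i x, d (i + 1) (d i x) = 0) {J : Ideal R} {i : ℕ}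
    (h : TorsionExact d J i) (h' : TorsionExact d J (i + 1)) (f : R) :
    TorsionExact d (J ⊔ Ideal.span {f}) (i + 1) := by
  intro z hz hdz
  rw [powTorsion_sup] at hz
  obtain ⟨k, hk⟩ := mem_powTorsion_span_singleton.1 hz.2
  obtain ⟨y, hy, rfl⟩ := h' z hz.1 hdz
  obtain ⟨x, hx, hxy⟩ := h (f ^ k • y) (Submodule.smul_mem _ _ hy) (by rw [map_smul, hk])
  obtain ⟨w, l, hxw, hl⟩ := exists_pow_smul_sub_pow_smul_eq_zero f k x
  have hw : w ∈ powTorsion (E i) J := mem_powTorsion_of_torsionOf_le hx hxw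
  refine ⟨y - d i w, ?_, by rw [map_sub, hd, sub_zero]⟩
  rw [powTorsion_sup]
  refine ⟨sub_mem hy (map_mem_powTorsion _ hw), mem_powTorsion_span_singleton.2 ⟨l + k, ?_⟩⟩
  calc f ^ (l + k) • (y - d i w) = d i (f ^ l • (x - f ^ k • w)) := by
        rw [pow_add, mul_smul, smul_sub, ← hxy, ← map_smul, ← map_sub, ← map_smul]
    _ = 0 := by rw [hl, map_zero]

theorem torsionExact_ofList (hd : ∀ i, Function.Exact (d i) (d (i + 1))) (F : List R) {i : ℕ}
    (hi : F.length ≤ i) : TorsionExact d (Ideal.ofList F) i := by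
  induction F generalizing i with
  | nil => simpa only [Ideal.ofList_nil] using torsionExact_bot hd i
  | cons f F ih =>
    obtain ⟨j, rfl⟩ := Nat.exists_eq_add_of_lt (Nat.lt_of_lt_of_le (Nat.succ_pos _) hi)
    rw [List.length_cons] at hi
    rw [Ideal.ofList_cons, sup_comm]
    exact TorsionExact.sup_span_singleton (fun i => (hd i).apply_apply_eq_zero) (ih (by lia))
      (ih (by lia)) f

/-- The Mayer–Vietoris sequence of local cohomology. -/
theorem TorsionExact.sup (hd : ∀ i x, d (i + 1) (d i x) = 0) {A B : Ideal R} {i : ℕ}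
    (h : TorsionExact d (A ⊓ B) i) (hA : TorsionExact d A (i + 1))
    (hB : TorsionExact d B (i + 1)) : TorsionExact d (A ⊔ B) (i + 1) := by
  intro z hz hdz
  rw [powTorsion_sup] at hz
  obtain ⟨a, ha, rfl⟩ := hA z hz.1 hdz
  obtain ⟨b, hb, hab⟩ := hB _ hz.2 hdz
  have hsub : a - b ∈ powTorsion (E (i + 1)) (A ⊓ B) := by
    rw [powTorsion_inf]
    exact sub_mem (Submodule.mem_sup_left ha) (Submodule.mem_sup_right hb)
  obtain ⟨c, hc, hcab⟩ := h (a - b) hsub (by rw [map_sub, hab, sub_self])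
  rw [powTorsion_inf] at hc
  obtain ⟨c₁, hc₁, c₂, hc₂, rfl⟩ := Submodule.mem_sup.1 hc
  have heq : a - d i c₁ = b + d i c₂ := by
    rw [map_add] at hcab
    rw [sub_eq_iff_eq_add, add_assoc, add_comm (d i c₂), hcab, add_sub_cancel]
  refine ⟨a - d i c₁, ?_, by rw [map_sub, hd, sub_zero]⟩
  rw [powTorsion_sup]
  exact ⟨sub_mem ha (map_mem_powTorsion _ hc₁),
    heq ▸ add_mem hb (map_mem_powTorsion _ hc₂)⟩

end TorsionExact

section Ext

open Abelian

variable {C : Type*} [Category* C] [Abelian C] [HasExt.{u} C] {S : ShortComplex C} {M M' N : C}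
  {i : ℕ}

theorem subsingleton_ext_X₁ (hS : S.ShortExact) (h₂ : Subsingleton (Ext S.X₂ N i))
    (h₃ : Subsingleton (Ext S.X₃ N (i + 1))) : Subsingleton (Ext S.X₁ N i) := by
  refine subsingleton_of_forall_eq 0 fun e => ?_
  obtain ⟨y, rfl⟩ := Ext.contravariant_sequence_exact₁ hS _ e (add_comm 1 i) (Subsingleton.elim _ _)
  rw [Subsingleton.elim y 0, Ext.comp_zero]

theorem subsingleton_ext_X₂ (hS : S.ShortExact) (h₁ : Subsingleton (Ext S.X₁ N i))
    (h₃ : Subsingleton (Ext S.X₃ N i)) : Subsingleton (Ext S.X₂ N i) := by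
  refine subsingleton_of_forall_eq 0 fun e => ?_
  obtain ⟨y, rfl⟩ := Ext.contravariant_sequence_exact₂ hS _ e (Subsingleton.elim _ _)
  rw [Subsingleton.elim y 0, Ext.comp_zero]

theorem subsingleton_ext_X₃ (hS : S.ShortExact) (h₁ : Subsingleton (Ext S.X₁ N i))
    (h₂ : Subsingleton (Ext S.X₂ N (i + 1))) : Subsingleton (Ext S.X₃ N (i + 1)) := by
  refine subsingleton_of_forall_eq 0 fun e => ?_
  obtain ⟨y, rfl⟩ := Ext.contravariant_sequence_exact₃ hS _ e (Subsingleton.elim _ _) (add_comm 1 i)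
  rw [Subsingleton.elim y 0, Ext.comp_zero]

theorem subsingleton_ext_of_iso (e : M ≅ M') (h : Subsingleton (Ext M N i)) :
    Subsingleton (Ext M' N i) := by
  refine subsingleton_of_forall_eq 0 fun x => ?_
  rw [← Ext.mk₀_id_comp x, ← e.inv_hom_id, ← Ext.mk₀_comp_mk₀, Ext.comp_assoc_of_second_deg_zero,
    Subsingleton.elim ((Ext.mk₀ e.hom).comp x _) 0, Ext.comp_zero]

end Ext

section ModuleExt

open Abelian RingTheory.Sequence Pointwise

variable {R : Type u} [CommRing R] {N : ModuleCat.{u} R} {i : ℕ}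

theorem smul_ext_eq_zero_of_mem_annihilator_left {M : ModuleCat.{u} R} {r : R}
    (hr : r ∈ Module.annihilator R M) (e : Ext M N i) : r • e = 0 := by
  have hzero : r • 𝟙 M = 0 := ModuleCat.hom_ext (LinearMap.ext (Module.mem_annihilator.1 hr))
  rw [← Ext.mk₀_id_comp e, ← Ext.smul_comp, ← Ext.mk₀_smul, hzero, Ext.mk₀_zero, Ext.zero_comp]

theorem smul_ext_eq_zero_of_mem_annihilator_right {M : ModuleCat.{u} R} {r : R}
    (hr : r ∈ Module.annihilator R N) (e : Ext M N i) : r • e = 0 := by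
  have hzero : r • 𝟙 N = 0 := ModuleCat.hom_ext (LinearMap.ext (Module.mem_annihilator.1 hr))
  rw [Ext.smul_eq_comp_mk₀, hzero, Ext.mk₀_zero, Ext.comp_zero]

theorem subsingleton_ext_of_smul_eq_self {M : ModuleCat.{u} R} {r : R}
    (hM : r ∈ Module.annihilator R M) (hN : ∀ n : N, r • n = n) : Subsingleton (Ext M N i) := by
  refine subsingleton_of_forall_eq 0 fun e => ?_
  have hid : r • 𝟙 N = 𝟙 N := ModuleCat.hom_ext (LinearMap.ext hN)
  rw [← smul_ext_eq_zero_of_mem_annihilator_left hM e, Ext.smul_eq_comp_mk₀, hid, Ext.comp_mk₀_id]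

theorem subsingleton_ext_prod {M₁ M₂ : Type u} [AddCommGroup M₁] [Module R M₁] [AddCommGroup M₂]
    [Module R M₂] (h₁ : Subsingleton (Ext (ModuleCat.of R M₁) N i))
    (h₂ : Subsingleton (Ext (ModuleCat.of R M₂) N i)) :
    Subsingleton (Ext (ModuleCat.of R (M₁ × M₂)) N i) :=
  have hS := ModuleCat.shortComplex_shortExact
    (ModuleCat.shortComplexOfCompEqZero (LinearMap.inl R M₁ M₂) (LinearMap.snd R M₁ M₂)
      Function.Exact.inl_snd.linearMap_comp_eq_zero)
    Function.Exact.inl_snd LinearMap.inl_injective LinearMap.snd_surjective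
  subsingleton_ext_X₂ hS h₁ h₂

section Colon

variable (J : Ideal R) (x : R)

theorem ker_toSpanSingleton_mkQ :
    LinearMap.ker (LinearMap.toSpanSingleton R (R ⧸ J) (J.mkQ x)) = J.colon {x} := by
  ext r
  exact (Submodule.Quotient.mk_eq_zero J).trans Submodule.mem_colon_singleton.symm

/-- The injection `R ⧸ (J : x) → R ⧸ J` induced by multiplication by `x`. -/
def colonMap : R ⧸ J.colon {x} →ₗ[R] R ⧸ J :=
  (J.colon {x}).liftQ (LinearMap.toSpanSingleton R (R ⧸ J) (J.mkQ x))
    (ker_toSpanSingleton_mkQ J x).ge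

theorem colonMap_injective : Function.Injective (colonMap J x) :=
  LinearMap.ker_eq_bot.1 (Submodule.ker_liftQ_eq_bot _ _ _ (ker_toSpanSingleton_mkQ J x).le)

theorem exact_colonMap_factor :
    Function.Exact (colonMap J x)
      (Submodule.factor (le_sup_left : J ≤ J ⊔ Ideal.span {x})) := by
  refine LinearMap.exact_iff.2 ?_
  rw [colonMap, Submodule.range_liftQ, LinearMap.range_toSpanSingleton, Submodule.factor,
    Submodule.mapQ, Submodule.ker_liftQ, LinearMap.comp_id, Submodule.ker_mkQ, Submodule.map_sup,
    Submodule.mkQ_map_self, bot_sup_eq, Ideal.span, Submodule.map_span, Set.image_singleton]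

theorem colon_shortExact :
    (ModuleCat.shortComplexOfCompEqZero _ _
      (exact_colonMap_factor J x).linearMap_comp_eq_zero).ShortExact :=
  ModuleCat.shortComplex_shortExact _ (exact_colonMap_factor J x) (colonMap_injective J x)
    (Submodule.factor_surjective le_sup_left)

variable {J x}

theorem subsingleton_ext_quotient_colon (hx : ∀ n : N, x • n = n)
    (h : Subsingleton (Ext (ModuleCat.of R (R ⧸ J)) N i)) :
    Subsingleton (Ext (ModuleCat.of R (R ⧸ J.colon {x})) N i) := by
  have hann : x ∈ Module.annihilator R (R ⧸ (J ⊔ Ideal.span {x})) := by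
    rw [Ideal.annihilator_quotient]
    exact Ideal.mem_sup_right (Ideal.mem_span_singleton_self x)
  exact subsingleton_ext_X₁ (colon_shortExact J x) h
    (subsingleton_ext_of_smul_eq_self hann hx)

theorem hasProjectiveDimensionLT_quotient_of_colon {d : ℕ}
    (h₁ : HasProjectiveDimensionLT (ModuleCat.of R (R ⧸ J.colon {x})) d)
    (h₂ : HasProjectiveDimensionLT (ModuleCat.of R (R ⧸ (J ⊔ Ideal.span {x}))) d) :
    HasProjectiveDimensionLT (ModuleCat.of R (R ⧸ J)) d :=
  (colon_shortExact J x).hasProjectiveDimensionLT_X₂ d h₁ h₂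

theorem hasProjectiveDimensionLT_quotient_sup_span_singleton {d : ℕ} (hx : J.colon {x} = J)
    (h : HasProjectiveDimensionLT (ModuleCat.of R (R ⧸ J)) d) :
    HasProjectiveDimensionLT (ModuleCat.of R (R ⧸ (J ⊔ Ideal.span {x}))) (d + 1) := by
  have hcolon : HasProjectiveDimensionLT (ModuleCat.of R (R ⧸ J.colon {x})) d := by rwa [hx]
  exact (colon_shortExact J x).hasProjectiveDimensionLT_X₃ d hcolon
    (hasProjectiveDimensionLT_of_ge _ d _ d.le_succ)

end Colon

section MayerVietoris

theorem exact_quotient_inf_sup {M : Type*} [AddCommGroup M] [Module R M] (p q : Submodule R M) :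
    Function.Exact
      ((Submodule.factor (inf_le_left : p ⊓ q ≤ p)).prod (Submodule.factor inf_le_right))
      ((Submodule.factor (le_sup_left : p ≤ p ⊔ q)).coprod
        (-Submodule.factor (le_sup_right : q ≤ p ⊔ q))) := by
  rintro ⟨a, b⟩
  obtain ⟨r, rfl⟩ := p.mkQ_surjective a
  obtain ⟨s, rfl⟩ := q.mkQ_surjective b
  have hmap : (Submodule.factor (le_sup_left : p ≤ p ⊔ q)).coprod
      (-Submodule.factor (le_sup_right : q ≤ p ⊔ q)) (p.mkQ r, q.mkQ s) = (p ⊔ q).mkQ (r - s) := by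
    rw [map_sub, sub_eq_add_neg]
    rfl
  rw [hmap, Submodule.mkQ_apply, Submodule.Quotient.mk_eq_zero, Submodule.mem_sup]
  constructor
  · rintro ⟨y, hy, z, hz, hyz⟩
    have hz_eq : s - (r - y) = -z := by rw [eq_sub_of_add_eq' hyz]; abel
    refine ⟨(p ⊓ q).mkQ (r - y), Prod.ext ?_ ?_⟩
    · exact ((Submodule.Quotient.eq p).2 (by simpa using hy)).symm
    · exact ((Submodule.Quotient.eq q).2 (hz_eq ▸ neg_mem hz)).symm
  · rintro ⟨c, hc⟩
    obtain ⟨t, rfl⟩ := (p ⊓ q).mkQ_surjective c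
    have hp := (Submodule.Quotient.eq p).1 (congrArg Prod.fst hc).symm
    have hq := (Submodule.Quotient.eq q).1 (congrArg Prod.snd hc)
    exact ⟨r - t, hp, t - s, hq, sub_add_sub_cancel r t s⟩

theorem injective_quotient_inf_prod {M : Type*} [AddCommGroup M] [Module R M]
    (p q : Submodule R M) :
    Function.Injective
      ((Submodule.factor (inf_le_left : p ⊓ q ≤ p)).prod
        (Submodule.factor (inf_le_right : p ⊓ q ≤ q))) := by
  refine LinearMap.ker_eq_bot.1 (LinearMap.ker_eq_bot'.2 fun c hc => ?_)
  obtain ⟨t, rfl⟩ := (p ⊓ q).mkQ_surjective c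
  exact (Submodule.Quotient.mk_eq_zero _).2
    ⟨(Submodule.Quotient.mk_eq_zero p).1 (congrArg Prod.fst hc),
      (Submodule.Quotient.mk_eq_zero q).1 (congrArg Prod.snd hc)⟩

/-- The Mayer–Vietoris sequence for `0 → R ⧸ A ⊓ B → R ⧸ A × R ⧸ B → R ⧸ A ⊔ B → 0`. -/
theorem subsingleton_ext_quotient_sup {A B : Ideal R}
    (h : Subsingleton (Ext (ModuleCat.of R (R ⧸ A ⊓ B)) N i))
    (hA : Subsingleton (Ext (ModuleCat.of R (R ⧸ A)) N (i + 1)))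
    (hB : Subsingleton (Ext (ModuleCat.of R (R ⧸ B)) N (i + 1))) :
    Subsingleton (Ext (ModuleCat.of R (R ⧸ A ⊔ B)) N (i + 1)) := by
  have hexact := exact_quotient_inf_sup A B
  refine subsingleton_ext_X₃ (ModuleCat.shortComplex_shortExact
    (ModuleCat.shortComplexOfCompEqZero _ _ hexact.linearMap_comp_eq_zero) hexact ?_ ?_) h
    (subsingleton_ext_prod hA hB)
  · exact injective_quotient_inf_prod A B
  · intro a
    obtain ⟨b, rfl⟩ := Submodule.factor_surjective (le_sup_left : A ≤ A ⊔ B) a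
    exact ⟨(b, 0), by simp⟩

end MayerVietoris

section RegularSequence

variable {M : Type u} [AddCommGroup M] [Module R M]

theorem subsingleton_ext_of_isWeaklyRegular_left {l : List R} (hl : IsWeaklyRegular M l)
    (hN : ∀ x ∈ l, x ∈ Module.annihilator R N)
    (h : Subsingleton (Ext (ModuleCat.of R (M ⧸ (Ideal.ofList l • ⊤ : Submodule R M))) N
      (i + l.length))) :
    Subsingleton (Ext (ModuleCat.of R M) N i) := by
  induction l generalizing M i with
  | nil =>
    refine subsingleton_ext_of_iso (LinearEquiv.toModuleIso ?_) h
    exact Submodule.quotEquivOfEqBot _ (by simp)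
  | cons x l ih =>
    obtain ⟨hx, hl⟩ := (isWeaklyRegular_cons_iff M x l).1 hl
    obtain ⟨hxN, hN⟩ := List.forall_mem_cons.1 hN
    have hquot : Subsingleton (Ext (ModuleCat.of R (QuotSMulTop x M)) N (i + 1)) := by
      refine ih hl hN (subsingleton_ext_of_iso ?_ (by
        rwa [List.length_cons, ← add_assoc, add_right_comm] at h))
      exact (Submodule.quotOfListConsSMulTopEquivQuotSMulTopInner M x l).toModuleIso
    have comp_eq_zero (y : Ext (ModuleCat.of R M) N i) :
        (Ext.mk₀ (x • 𝟙 (ModuleCat.of R M))).comp y (zero_add i) = 0 := by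
      rw [Ext.mk₀_smul, Ext.smul_comp, Ext.mk₀_id_comp,
        smul_ext_eq_zero_of_mem_annihilator_right hxN]
    refine subsingleton_of_forall_eq 0 fun e => ?_
    have hS := IsSMulRegular.smulShortComplex_shortExact (M := ModuleCat.of R M) hx
    obtain ⟨y, rfl⟩ := Ext.contravariant_sequence_exact₁ hS _ e (add_comm 1 i)
      (Subsingleton.elim (h := hquot) _ _)
    exact comp_eq_zero y

theorem subsingleton_ext_of_quotSMulTop {x : R} (hx : IsSMulRegular M x) {k : ℕ}
    (hN : x ^ k ∈ Module.annihilator R N)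
    (h : ∀ j, j + 1 = i → Subsingleton (Ext N (ModuleCat.of R (QuotSMulTop x M)) j)) :
    Subsingleton (Ext N (ModuleCat.of R M) i) := by
  have hS := (IsSMulRegular.smulShortComplex_shortExact (M := ModuleCat.of R M) hx)
  have eq_zero_of_smul (e : Ext N (ModuleCat.of R M) i) (he : x • e = 0) : e = 0 := by
    rw [Ext.smul_eq_comp_mk₀] at he
    obtain _ | i := i
    · have := hS.mono_f
      exact Ext.postcomp_mk₀_injective_of_mono N (x • 𝟙 (ModuleCat.of R M)) (hf := this)
        (by simpa using he)
    · obtain ⟨y, rfl⟩ := Ext.covariant_sequence_exact₁ _ hS e he rfl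
      exact (congrArg (Ext.comp · _ _) (Subsingleton.elim (h := h i rfl) y 0)).trans
        (Ext.zero_comp ..)
  have eq_zero_of_pow_smul (e : Ext N (ModuleCat.of R M) i) (he : x ^ k • e = 0) : e = 0 := by
    clear hN
    induction k with
    | zero => rwa [pow_zero, one_smul] at he
    | succ k ih => exact ih (eq_zero_of_smul _ (by rwa [← mul_smul, ← pow_succ']))
  exact subsingleton_of_forall_eq 0 fun e => eq_zero_of_pow_smul e
    (smul_ext_eq_zero_of_mem_annihilator_left hN e)

theorem subsingleton_ext_of_lt_length {l : List R} (hl : IsWeaklyRegular M l)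
    (hN : ∀ x ∈ l, ∃ k : ℕ, x ^ k ∈ Module.annihilator R N) (hi : i < l.length) :
    Subsingleton (Ext N (ModuleCat.of R M) i) := by
  induction l generalizing M i with
  | nil => exact absurd hi (Nat.not_lt_zero i)
  | cons x l ih =>
    obtain ⟨hx, hl⟩ := (isWeaklyRegular_cons_iff M x l).1 hl
    obtain ⟨⟨k, hk⟩, hN⟩ := List.forall_mem_cons.1 hN
    rw [List.length_cons] at hi
    exact subsingleton_ext_of_quotSMulTop hx hk fun j hj => ih hl hN (by lia)

theorem subsingleton_hom_of_isWeaklyRegular {l : List R} (hl : IsWeaklyRegular M l)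
    (hN : ∀ x ∈ l, x ∈ Module.annihilator R N)
    (h : Subsingleton (Ext N (ModuleCat.of R M) l.length)) :
    Subsingleton (N →ₗ[R] M ⧸ (Ideal.ofList l • ⊤ : Submodule R M)) := by
  induction l generalizing M with
  | nil =>
    have : Subsingleton (N →ₗ[R] M) :=
      ((ModuleCat.homEquiv (M := N) (N := ModuleCat.of R M)).symm.trans
        Ext.homEquiv₀.symm).injective.subsingleton
    exact ((Submodule.quotEquivOfEqBot _ (by simp)).congrRight (M := N)).injective.subsingleton
  | cons x l ih =>
    obtain ⟨hx, hl'⟩ := (isWeaklyRegular_cons_iff M x l).1 hl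
    have hlt : Subsingleton (Ext N (ModuleCat.of R M) l.length) :=
      subsingleton_ext_of_lt_length hl (fun y hy => ⟨1, by simpa using hN y hy⟩) (by simp)
    have hquot : Subsingleton (Ext N (ModuleCat.of R (QuotSMulTop x M)) l.length) := by
      refine subsingleton_of_forall_eq 0 fun e => ?_
      have hS := IsSMulRegular.smulShortComplex_shortExact (M := ModuleCat.of R M) hx
      obtain ⟨y, rfl⟩ :=
        Ext.covariant_sequence_exact₃ _ hS e rfl (Subsingleton.elim (h := h) _ _)
      exact (congrArg (Ext.comp · _ _) (Subsingleton.elim (h := hlt) y 0)).trans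
        (Ext.zero_comp ..)
    have := ih hl' (fun y hy => hN y (List.mem_cons_of_mem x hy)) hquot
    exact ((Submodule.quotOfListConsSMulTopEquivQuotSMulTopInner M x l).congrRight
      (M := N)).injective.subsingleton

end RegularSequence

end ModuleExt

section ProjDim

variable {R : Type} [CommRing R]

theorem subsingleton_ext_obj_iff (X Y : ModuleCat.{0} R) (n : ℕ) :
    Subsingleton (((Ext R (ModuleCat R) (n + 1)).obj (Opposite.op X)).obj Y) ↔
      Subsingleton (Abelian.Ext X Y (n + 1)) := by
  let P := projectiveResolution X
  have exactAt_iff : Subsingleton (((Ext R (ModuleCat R) (n + 1)).obj (Opposite.op X)).obj Y) ↔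
      (P.complex.linearYonedaObj R Y).ExactAt (n + 1) := by
    rw [HomologicalComplex.exactAt_iff_isZero_homology, ← (P.isoExt (n + 1) Y).isZero_iff,
      ModuleCat.isZero_iff_subsingleton]
  rw [exactAt_iff, HomologicalComplex.exactAt_iff' _ n (n + 1) (n + 2) (by simp) (by simp),
    ShortComplex.moduleCat_exact_iff]
  constructor
  · intro h
    refine subsingleton_of_forall_eq 0 fun e => ?_
    obtain ⟨f, hf, rfl⟩ := P.extMk_surjective e (n + 2) rfl
    exact (P.extMk_eq_zero_iff f _ rfl hf n rfl).2 (h f hf)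
  · intro h f hf
    exact (P.extMk_eq_zero_iff f (n + 2) rfl hf n rfl).1 (Subsingleton.elim _ _)

theorem projDim_eq {M : Type} [AddCommGroup M] [Module R M] {p : ℕ}
    (hle : HasProjectiveDimensionLT (ModuleCat.of R M) (p + 1)) {N : ModuleCat.{0} R}
    (hN : ¬ Subsingleton (Abelian.Ext (ModuleCat.of R M) N p)) : projDim R M = p := by
  refine le_antisymm (sInf_le fun i hi N => ?_) (le_sInf fun d hd => ?_)
  · obtain ⟨j, rfl⟩ := Nat.exists_eq_add_of_lt (Nat.cast_lt.1 hi)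
    exact (subsingleton_ext_obj_iff _ N _).2
      (HasProjectiveDimensionLT.subsingleton _ (p + 1) _ (by lia) N)
  · by_contra! hlt
    obtain _ | q := p
    · exact not_lt_bot hlt
    · exact hN ((subsingleton_ext_obj_iff _ N q).1 (hd _ hlt N))

end ProjDim

section LocalCohomology

variable {R : Type u} [CommRing R] {M : ModuleCat.{u} R}

/-- The differentials of an injective resolution of a module, as linear maps. -/
noncomputable def injectiveDiff (P : InjectiveResolution M) (i : ℕ) :
    P.cocomplex.X i →ₗ[R] P.cocomplex.X (i + 1) :=
  (P.cocomplex.d i (i + 1)).hom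

instance moduleInjective_cocomplex_X (P : InjectiveResolution M) (i : ℕ) :
    Module.Injective R (P.cocomplex.X i) :=
  have : Injective (ModuleCat.of R (P.cocomplex.X i)) := P.injective i
  Module.injective_module_of_injective_object R _

theorem exact_injectiveDiff (P : InjectiveResolution M) (i : ℕ) :
    Function.Exact (injectiveDiff P i) (injectiveDiff P (i + 1)) := by
  have hexact := P.cocomplex_exactAt_succ i
  rw [HomologicalComplex.exactAt_iff' _ i (i + 1) (i + 2) (by simp) (by simp)] at hexact
  exact LinearMap.exact_iff.2 (ShortComplex.Exact.moduleCat_range_eq_ker hexact).symm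

theorem exists_mk₀_factor_comp_eq_zero [IsNoetherianRing R] {J : Ideal R}
    (P : InjectiveResolution M) {q : ℕ} (h : TorsionExact (injectiveDiff P) J q)
    (e : Abelian.Ext (ModuleCat.of R (R ⧸ J)) M (q + 1)) :
    ∃ t : ℕ, (Abelian.Ext.mk₀ (ModuleCat.ofHom (Submodule.factor
      (Ideal.pow_le_self t.succ_ne_zero : J ^ (t + 1) ≤ J)))).comp e (zero_add _) = 0 := by
  obtain ⟨f, hf, rfl⟩ := P.extMk_surjective e (q + 2) rfl
  obtain ⟨y, hy, hyf⟩ := h (f.hom (1 : R ⧸ J))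
    (mem_powTorsion.2 ((le_torsionOf_map_one f.hom).trans Ideal.le_radical))
    (congrArg (fun g => g.hom (1 : R ⧸ J)) hf)
  obtain ⟨t, ht⟩ :=
    Ideal.exists_pow_le_of_le_radical_of_fg (mem_powTorsion.1 hy) (IsNoetherian.noetherian J)
  let g : R ⧸ J ^ (t + 1) →ₗ[R] P.cocomplex.X q :=
    (J ^ (t + 1)).liftQ (LinearMap.toSpanSingleton R _ y)
      ((Ideal.pow_le_pow_right t.le_succ).trans ht)
  refine ⟨t, ?_⟩
  rw [InjectiveResolution.mk₀_comp_extMk, P.extMk_eq_zero_iff _ _ _ _ q rfl]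
  refine ⟨ModuleCat.ofHom g, ModuleCat.hom_ext ?_⟩
  refine Submodule.linearMap_qext _ (LinearMap.ext_ring ?_)
  change injectiveDiff P q ((1 : R) • y) = f.hom (1 : R ⧸ J)
  rw [one_smul, hyf]

theorem subsingleton_ext_of_torsionExact [IsNoetherianRing R] {J : Ideal R}
    (P : InjectiveResolution M) {q : ℕ} (h : TorsionExact (injectiveDiff P) J q)
    (hM : ∀ (N : ModuleCat.{u} R) (t : ℕ), J ^ t ≤ Module.annihilator R N →
      Subsingleton (Abelian.Ext N M q)) :
    Subsingleton (Abelian.Ext (ModuleCat.of R (R ⧸ J)) M (q + 1)) := by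
  refine subsingleton_of_forall_eq 0 fun e => ?_
  obtain ⟨t, ht⟩ := exists_mk₀_factor_comp_eq_zero P h e
  let π : R ⧸ J ^ (t + 1) →ₗ[R] R ⧸ J := Submodule.factor (Ideal.pow_le_self t.succ_ne_zero)
  have hker : J ^ (t + 1) ≤ Module.annihilator R (LinearMap.ker π) :=
    (Ideal.annihilator_quotient (I := J ^ (t + 1))).ge.trans
      (LinearMap.annihilator_le_of_injective _ (LinearMap.ker π).injective_subtype)
  have hvanish := hM (ModuleCat.of R (LinearMap.ker π)) (t + 1) hker
  have hS := LinearMap.shortExact_shortComplexKer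
    (f := π) (Submodule.factor_surjective (Ideal.pow_le_self t.succ_ne_zero))
  obtain ⟨y, rfl⟩ := Abelian.Ext.contravariant_sequence_exact₃ hS _ e ht (add_comm 1 q)
  exact (congrArg (Abelian.Ext.comp _ · _) (Subsingleton.elim (h := hvanish) y 0)).trans
    (Abelian.Ext.comp_zero ..)

theorem not_torsionExact_of_isWeaklyRegular [IsNoetherianRing R] {l : List R} {q : ℕ}
    (P : InjectiveResolution (ModuleCat.of R R)) (hl : RingTheory.Sequence.IsWeaklyRegular R l)
    (hlength : l.length = q + 1) (htop : Ideal.ofList l ≠ ⊤) :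
    ¬ TorsionExact (injectiveDiff P) (Ideal.ofList l) q := by
  intro h
  have mem_ofList {x : R} (hx : x ∈ l) : x ∈ Ideal.ofList l := Ideal.subset_span hx
  have hext : Subsingleton
      (Abelian.Ext (ModuleCat.of R (R ⧸ Ideal.ofList l)) (ModuleCat.of R R) l.length) := by
    rw [hlength]
    exact subsingleton_ext_of_torsionExact P h fun N t hN => subsingleton_ext_of_lt_length hl
      (fun x hx => ⟨t, hN (Ideal.pow_mem_pow (mem_ofList hx) t)⟩) (by lia)
  have hhom := subsingleton_hom_of_isWeaklyRegular hl
    (fun x hx => by rw [Ideal.annihilator_quotient]; exact mem_ofList hx) hext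
  rw [smul_eq_mul, Ideal.mul_top] at hhom
  have hid := LinearMap.congr_fun
    (Subsingleton.elim (LinearMap.id : R ⧸ Ideal.ofList l →ₗ[R] R ⧸ Ideal.ofList l) 0) 1
  exact htop ((Ideal.eq_top_iff_one _).2 (Ideal.Quotient.eq_zero_iff_mem.1 hid))

end LocalCohomology

/-- The nonfaces of a simplicial complex on `V`, as an upward closed predicate. Unions and
intersections of Stanley–Reisner ideals become `⊔` and `⊓` here. -/
abbrev Nonfaces (V : Type*) := Set V →o Prop

namespace Nonfaces

variable {V : Type*}

/-- The nonfaces containing the vertex `v`; its ideal is generated by the variable of `v`. -/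
def var (v : V) : Nonfaces V := ⟨fun u => v ∈ u, fun _ _ huw hv => huw hv⟩

/-- The nonfaces containing both `a` and `b`. -/
noncomputable def edge (a b : V) : Nonfaces V := var a ⊓ var b

/-- The nonfaces containing one of the listed vertices. -/
noncomputable def vars : List V → Nonfaces V
  | [] => ⊥
  | v :: ws => var v ⊔ vars ws

/-- The nonfaces of the independence complex of the walk through the listed vertices. -/
noncomputable def path : List V → Nonfaces V
  | a :: b :: l => edge a b ⊔ path (b :: l)
  | _ => ⊥

/-- The nonfaces of the independence complex of the closed walk `c, l, c`. -/
noncomputable def cycle (c : V) (l : List V) : Nonfaces V := path (c :: l ++ [c])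

/-- The nonfaces of the link of `S`. On ideals this is the colon by the product of the variables
in `S`, and also the effect of setting these variables to `1`. -/
def link (Q : Nonfaces V) (S : Set V) : Nonfaces V :=
  ⟨fun u => Q (u ∪ S), fun _ _ huw => Q.monotone (Set.union_subset_union_left S huw)⟩

variable {P Q : Nonfaces V} {S u : Set V} {a b c v : V} {l ws : List V}

@[simp] theorem sup_apply : (P ⊔ Q) u ↔ P u ∨ Q u := Iff.rfl

@[simp] theorem inf_apply : (P ⊓ Q) u ↔ P u ∧ Q u := Iff.rfl

@[simp] theorem bot_apply : (⊥ : Nonfaces V) u ↔ False := Iff.rfl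

@[simp] theorem var_apply : var v u ↔ v ∈ u := Iff.rfl

@[simp] theorem edge_apply : edge a b u ↔ a ∈ u ∧ b ∈ u := Iff.rfl

@[simp] theorem link_apply : Q.link S u ↔ Q (u ∪ S) := Iff.rfl

@[simp] theorem vars_nil : vars ([] : List V) = ⊥ := rfl

@[simp] theorem vars_cons : vars (v :: ws) = var v ⊔ vars ws := rfl

@[simp] theorem path_nil : path ([] : List V) = ⊥ := by rw [path]; simp

@[simp] theorem path_singleton : path [a] = ⊥ := by rw [path]; simp

@[simp] theorem path_cons_cons : path (a :: b :: l) = edge a b ⊔ path (b :: l) := by rw [path]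

theorem sup_bot : Q ⊔ ⊥ = Q := sup_bot_eq Q

theorem vars_apply : vars ws u ↔ ∃ v ∈ ws, v ∈ u := by
  induction ws with
  | nil => simp
  | cons v ws ih => simp [ih]

theorem link_sup : (P ⊔ Q).link S = P.link S ⊔ Q.link S := rfl

theorem var_link (h : v ∉ S) : (var v).link S = var v := by ext u; simp [h]

theorem vars_link (h : ∀ v ∈ ws, v ∉ S) : (vars ws).link S = vars ws := by
  induction ws with
  | nil => rfl
  | cons v ws ih =>
    obtain ⟨hv, hws⟩ := List.forall_mem_cons.1 h
    rw [vars_cons, link_sup, ih hws, var_link hv]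

theorem path_link {l : List V} (h : ∀ v ∈ l, v ∉ S) : (path l).link S = path l := by
  match l with
  | [] => simp only [path_nil]; rfl
  | [_] => simp only [path_singleton]; rfl
  | a :: b :: l =>
    obtain ⟨ha, hl⟩ := List.forall_mem_cons.1 h
    rw [path_cons_cons, link_sup, path_link hl]
    ext u
    simp [ha, hl b]

theorem var_sup_path_cons : var a ⊔ path (a :: l) = var a ⊔ path l := by
  obtain _ | ⟨b, l⟩ := l
  · simp
  · ext u
    simp only [path_cons_cons, sup_apply, var_apply, edge_apply]
    tauto

theorem path_append_pair (l : List V) (a b : V) :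
    path (l ++ [a, b]) = path (l ++ [a]) ⊔ edge a b := by
  match l with
  | [] => ext u; simp
  | [c] => ext u; simp
  | c :: d :: l =>
    have ih := path_append_pair (d :: l) a b
    simp only [List.cons_append, path_cons_cons] at ih ⊢
    rw [ih, sup_assoc]

theorem var_sup_path_concat : var a ⊔ path (l ++ [a]) = var a ⊔ path l := by
  obtain rfl | ⟨l, b, rfl⟩ := List.eq_nil_or_concat' l
  · simp
  · rw [List.append_assoc, List.singleton_append, path_append_pair]
    ext u
    simp only [sup_apply, var_apply, edge_apply]
    tauto

theorem var_sup_cycle : var c ⊔ cycle c l = var c ⊔ path l := by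
  rw [cycle, List.cons_append, var_sup_path_cons, var_sup_path_concat]

theorem cycle_cons_concat {z : V} :
    cycle c (a :: (l ++ [z])) = edge c a ⊔ path (a :: (l ++ [z])) ⊔ edge z c := by
  have hend := path_append_pair (a :: l) z c
  simp only [List.cons_append] at hend
  simp only [cycle, List.cons_append, List.append_assoc, path_cons_cons, List.nil_append, hend,
    sup_assoc]

theorem cycle_link_singleton {z : V} (hc : c ∉ a :: (l ++ [z])) :
    (cycle c (a :: (l ++ [z]))).link {c} = vars [a, z] ⊔ path l := by
  have ha : a ≠ c := by rintro rfl; simp at hc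
  have hz : z ≠ c := by rintro rfl; simp at hc
  have hinner : var a ⊔ var z ⊔ path (a :: (l ++ [z])) = var a ⊔ var z ⊔ path l := by
    rw [sup_right_comm, var_sup_path_cons, sup_right_comm, sup_assoc, var_sup_path_concat,
      sup_assoc]
  rw [cycle_cons_concat, link_sup, link_sup, path_link (by rintro v hv rfl; exact hc hv)]
  have key := fun u => iff_of_eq (DFunLike.congr_fun hinner u)
  ext u
  specialize key u
  simp only [vars_cons, vars_nil, sup_apply, link_apply, var_apply, edge_apply, bot_apply,
    Set.mem_union, Set.mem_singleton_iff, ha, hz, or_true, or_false, and_true,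
    true_and] at key ⊢
  tauto

end Nonfaces

section SquarefreeIdeal

variable (K : Type*) [CommRing K] {V : Type*}

/-- The Stanley–Reisner ideal: the squarefree monomial ideal spanned by the monomials whose
support is a nonface. -/
noncomputable def squarefreeIdeal (Q : Nonfaces V) : Ideal (MvPolynomial V K) :=
  Ideal.span ((fun m : V →₀ ℕ => monomial m (1 : K)) '' {m | Q (m.support : Set V)})

variable {K} {P Q : Nonfaces V} {p : MvPolynomial V K}

theorem mem_squarefreeIdeal :
    p ∈ squarefreeIdeal K Q ↔ ∀ m ∈ p.support, Q (m.support : Set V) := by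
  rw [squarefreeIdeal, mem_ideal_span_monomial_image]
  refine forall₂_congr fun m _ => ⟨?_, fun hm => ⟨m, hm, le_rfl⟩⟩
  rintro ⟨n, hn, hnm⟩
  exact Q.monotone (Finset.coe_subset.2 (Finsupp.support_mono hnm)) hn

theorem monomial_mem_squarefreeIdeal {m : V →₀ ℕ} (h : Q (m.support : Set V)) :
    monomial m (1 : K) ∈ squarefreeIdeal K Q :=
  Ideal.subset_span ⟨m, h, rfl⟩

theorem squarefreeIdeal_sup :
    squarefreeIdeal K (P ⊔ Q) = squarefreeIdeal K P ⊔ squarefreeIdeal K Q := by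
  rw [squarefreeIdeal, squarefreeIdeal, squarefreeIdeal, ← Ideal.span_union, ← Set.image_union]
  rfl

theorem squarefreeIdeal_inf :
    squarefreeIdeal K (P ⊓ Q) = squarefreeIdeal K P ⊓ squarefreeIdeal K Q := by
  ext p
  simp only [Ideal.mem_inf, mem_squarefreeIdeal, Nonfaces.inf_apply, ← forall_and]

theorem squarefreeIdeal_bot : squarefreeIdeal K (⊥ : Nonfaces V) = ⊥ := by
  simp [squarefreeIdeal]

theorem squarefreeIdeal_var (v : V) :
    squarefreeIdeal K (Nonfaces.var v) = Ideal.span {X v} := by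
  ext p
  rw [mem_squarefreeIdeal, ← Set.image_singleton (f := X), mem_ideal_span_X_image]
  simp

theorem squarefreeIdeal_vars (ws : List V) :
    squarefreeIdeal K (Nonfaces.vars ws) = Ideal.ofList (ws.map X) := by
  induction ws with
  | nil => rw [Nonfaces.vars_nil, squarefreeIdeal_bot, List.map_nil, Ideal.ofList_nil]
  | cons v ws ih =>
    rw [Nonfaces.vars_cons, squarefreeIdeal_sup, ih, squarefreeIdeal_var, List.map_cons,
      Ideal.ofList_cons]

theorem coe_support_add (m s : V →₀ ℕ) :
    ((m + s).support : Set V) = (m.support : Set V) ∪ s.support := by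
  ext v
  simp
  lia

theorem colon_monomial_squarefreeIdeal (s : V →₀ ℕ) :
    (squarefreeIdeal K Q).colon {monomial s 1} =
      squarefreeIdeal K (Q.link (s.support : Set V)) := by
  ext p
  simp only [Submodule.mem_colon_singleton, mem_squarefreeIdeal, smul_eq_mul, Nonfaces.link_apply,
    mem_support_iff]
  constructor
  · intro h m hm
    rw [← coe_support_add]
    exact h (m + s) (by rwa [coeff_mul_monomial, mul_one])
  · intro h m hm
    rw [coeff_mul_monomial', mul_one] at hm
    obtain ⟨hle, hm⟩ := ite_ne_right_iff.1 hm
    rw [← tsub_add_cancel_of_le hle, coe_support_add]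
    exact h _ hm

theorem colon_X_squarefreeIdeal (v : V) :
    (squarefreeIdeal K Q).colon {X v} = squarefreeIdeal K (Q.link {v}) := by
  rw [X, colon_monomial_squarefreeIdeal, Finsupp.support_single v one_ne_zero,
    Finset.coe_singleton]

theorem exists_finsupp_support_eq [Finite V] (S : Set V) :
    ∃ s : V →₀ ℕ, (s.support : Set V) = S := by
  classical
  refine ⟨Finsupp.indicator S.toFinite.toFinset fun _ _ => 1, ?_⟩
  ext v
  simp [Finsupp.indicator_apply]

open scoped Classical in
/-- The substitution of `1` for the variables in `S`. -/
noncomputable def setOne (K : Type*) [CommRing K] {V : Type*} (S : Set V) :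
    MvPolynomial V K →ₐ[K] MvPolynomial V K :=
  aeval fun v => if v ∈ S then 1 else X v

open scoped Classical in
theorem setOne_monomial (S : Set V) (m : V →₀ ℕ) :
    setOne K S (monomial m 1) = monomial (m.filter (· ∉ S)) 1 := by
  rw [setOne, aeval_monomial, map_one, one_mul, monomial_eq, C_1, one_mul,
    Finsupp.prod_filter_index, Finsupp.support_filter, Finset.prod_filter]
  refine Finset.prod_congr rfl fun v _ => ?_
  split_ifs <;> simp_all

theorem map_setOne_squarefreeIdeal [Finite V] (S : Set V) :
    (squarefreeIdeal K Q).map (setOne K S) = squarefreeIdeal K (Q.link S) := by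
  classical
  refine le_antisymm ?_ ?_
  · rw [squarefreeIdeal, Ideal.map_span, Ideal.span_le]
    rintro _ ⟨_, ⟨m, hm, rfl⟩, rfl⟩
    rw [setOne_monomial]
    refine monomial_mem_squarefreeIdeal (Q.monotone (fun v hv => ?_) hm)
    by_cases hvS : v ∈ S <;> simp_all
  · rw [squarefreeIdeal, Ideal.span_le]
    rintro _ ⟨m, hm, rfl⟩
    obtain ⟨s, rfl⟩ := exists_finsupp_support_eq S
    have hmem : monomial (m + s) (1 : K) ∈ squarefreeIdeal K Q := by
      refine monomial_mem_squarefreeIdeal ?_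
      rwa [coe_support_add]
    have hmap := Ideal.mem_map_of_mem (setOne K (s.support : Set V)) hmem
    rw [setOne_monomial] at hmap
    refine Ideal.mem_of_dvd _ (monomial_dvd_monomial.2 ⟨Or.inr fun v => ?_, one_dvd _⟩) hmap
    by_cases hv : s v = 0 <;> simp [hv]

theorem isWeaklyRegular_map_X {ws : List V} (hws : ws.Nodup) :
    RingTheory.Sequence.IsWeaklyRegular (MvPolynomial V K)
      (ws.map X : List (MvPolynomial V K)) := by
  induction ws using List.reverseRecOn with
  | nil => exact .nil _ _
  | append_singleton ws v ih =>
    obtain ⟨hws, -, hv⟩ := List.nodup_append'.1 hws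
    rw [List.map_append, RingTheory.Sequence.isWeaklyRegular_append_iff, List.map_singleton,
      RingTheory.Sequence.isWeaklyRegular_singleton_iff,
      isSMulRegular_quotient_iff_mem_of_smul_mem, smul_eq_mul, Ideal.mul_top,
      ← squarefreeIdeal_vars]
    refine ⟨ih hws, fun p hp => ?_⟩
    rw [smul_eq_mul, mul_comm, ← smul_eq_mul, ← Submodule.mem_colon_singleton,
      colon_X_squarefreeIdeal, Nonfaces.vars_link] at hp
    · exact hp
    · rintro w hw rfl
      exact hv hw (by simp)

end SquarefreeIdeal

namespace Nonfaces

variable {V : Type*} {a b c : V} {l : List V}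

theorem path_link_second (hab : a ≠ b) (hl : b ∉ c :: l) :
    (path (a :: b :: c :: l)).link {b} = var a ⊔ var c ⊔ path l := by
  have hcb : c ≠ b := by rintro rfl; simp at hl
  rw [path_cons_cons, path_cons_cons, link_sup, link_sup,
    path_link (by rintro v hv rfl; exact hl hv)]
  have hstar : (edge a b).link {b} ⊔ (edge b c).link {b} = var a ⊔ var c := by
    ext u
    simp [hab, hcb]
  rw [← sup_assoc, hstar, sup_assoc, var_sup_path_cons, sup_assoc]

theorem var_sup_path_cons_cons : var b ⊔ path (a :: b :: l) = var b ⊔ path l := by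
  have hedge : var b ⊔ edge a b = var b := sup_of_le_left inf_le_right
  rw [path_cons_cons, ← sup_assoc, hedge, var_sup_path_cons]

end Nonfaces

theorem exists_eq_cons_append_singleton {α : Type*} {l : List α} (hl : 2 ≤ l.length) :
    ∃ a w z, l = a :: (w ++ [z]) := by
  obtain _ | ⟨a, l⟩ := l
  · simp at hl
  · obtain rfl | ⟨w, z, rfl⟩ := List.eq_nil_or_concat' l
    · simp at hl
    · exact ⟨a, w, z, rfl⟩

section ProjectiveDimension

open Nonfaces

/-- The Stanley–Reisner ring, as a module over the polynomial ring. -/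
noncomputable abbrev stanleyReisner (K : Type u) [CommRing K] {V : Type u} (Q : Nonfaces V) :
    ModuleCat.{u} (MvPolynomial V K) :=
  ModuleCat.of (MvPolynomial V K) (MvPolynomial V K ⧸ squarefreeIdeal K Q)

variable {K : Type u} [CommRing K] {V : Type u} {Q : Nonfaces V} {v : V} {d e : ℕ}

theorem hasProjectiveDimensionLE_of_link (v : V)
    (hlink : HasProjectiveDimensionLE (stanleyReisner K (Q.link {v})) d)
    (hsup : HasProjectiveDimensionLE (stanleyReisner K (Q ⊔ var v)) d) :
    HasProjectiveDimensionLE (stanleyReisner K Q) d := by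
  refine hasProjectiveDimensionLT_quotient_of_colon (x := X v) ?_ ?_
  · rwa [colon_X_squarefreeIdeal]
  · rwa [← squarefreeIdeal_var, ← squarefreeIdeal_sup]

theorem hasProjectiveDimensionLE_sup_var (hv : Q.link {v} = Q)
    (h : HasProjectiveDimensionLE (stanleyReisner K Q) d) :
    HasProjectiveDimensionLE (stanleyReisner K (Q ⊔ var v)) (d + 1) := by
  rw [stanleyReisner, squarefreeIdeal_sup, squarefreeIdeal_var]
  exact hasProjectiveDimensionLT_quotient_sup_span_singleton
    (by rw [colon_X_squarefreeIdeal, hv]) h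

theorem hasProjectiveDimensionLE_sup_edge {a b : V} (hab : a ≠ b) (ha : Q.link {a} = Q)
    (hb : Q.link {b} = Q) (h : HasProjectiveDimensionLE (stanleyReisner K Q) d) :
    HasProjectiveDimensionLE (stanleyReisner K (Q ⊔ edge a b)) (d + 1) := by
  refine hasProjectiveDimensionLE_of_link b ?_ ?_
  · have hlink : (Q ⊔ edge a b).link {b} = Q ⊔ var a := by
      rw [link_sup, hb]
      ext u
      simp [hab]
    rw [hlink]
    exact hasProjectiveDimensionLE_sup_var ha h
  · have hedge : edge a b ⊔ var b = var b := sup_of_le_right inf_le_right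
    rw [sup_assoc, hedge]
    exact hasProjectiveDimensionLE_sup_var hb h

theorem hasProjectiveDimensionLE_sup_path {Q : Nonfaces V} {d : ℕ} {l : List V}
    (hl : l.Nodup) (hQ : ∀ v ∈ l, Q.link {v} = Q)
    (h : HasProjectiveDimensionLE (stanleyReisner K Q) d) (he : d + 2 * l.length / 3 ≤ e) :
    HasProjectiveDimensionLE (stanleyReisner K (Q ⊔ path l)) e := by
  match l with
  | [] =>
    rw [path_nil, Nonfaces.sup_bot]
    exact hasProjectiveDimensionLT_of_ge _ (d + 1) _ (by simpa using he)
  | [_] =>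
    rw [path_singleton, Nonfaces.sup_bot]
    exact hasProjectiveDimensionLT_of_ge _ (d + 1) _ (by simpa using he)
  | [a, b] =>
    have hedge := hasProjectiveDimensionLE_sup_edge (by simpa using hl) (hQ a (by simp))
      (hQ b (by simp)) h
    rw [path_cons_cons, path_singleton, Nonfaces.sup_bot]
    exact hasProjectiveDimensionLT_of_ge _ (d + 1 + 1) _ (by simpa using he)
  | a :: b :: c :: l =>
    obtain ⟨⟨hab, hac, hal⟩, ⟨hbc, hbl⟩, hcl, hl⟩ := by
      simpa only [List.nodup_cons, List.mem_cons, not_or] using hl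
    obtain ⟨ha, hb, hc, hQ⟩ := by simpa only [List.forall_mem_cons] using hQ
    have he : d + 2 * (l.length + 3) / 3 ≤ e := he
    refine hasProjectiveDimensionLE_of_link b ?_ ?_
    · have hac' : (Q ⊔ var a).link {c} = Q ⊔ var a := by
        rw [link_sup, hc, var_link (S := {c}) hac]
      have hlink : (Q ⊔ path (a :: b :: c :: l)).link {b} = Q ⊔ var a ⊔ var c ⊔ path l := by
        rw [link_sup, hb, path_link_second hab (by simp [hbc, hbl]), ← sup_assoc, ← sup_assoc]
      rw [hlink]
      have hvars := hasProjectiveDimensionLE_sup_var hac' (hasProjectiveDimensionLE_sup_var ha h)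
      refine hasProjectiveDimensionLE_sup_path hl (fun v hv => ?_) hvars (by lia)
      have hav : a ∉ ({v} : Set V) := by rintro rfl; exact hal hv
      have hcv : c ∉ ({v} : Set V) := by rintro rfl; exact hcl hv
      rw [link_sup, link_sup, hQ v hv, var_link hav, var_link hcv]
    · rw [sup_assoc, sup_comm (path _), var_sup_path_cons_cons, ← sup_assoc]
      refine hasProjectiveDimensionLE_sup_path (l := c :: l) (List.nodup_cons.2 ⟨hcl, hl⟩)
        (List.forall_mem_cons.2 ⟨?_, fun v hv => ?_⟩)
        (hasProjectiveDimensionLE_sup_var hb h) (by simp only [List.length_cons]; lia)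
      · rw [link_sup, hc, var_link (S := {c}) hbc]
      · have hbv : b ∉ ({v} : Set V) := by rintro rfl; exact hbl hv
        rw [link_sup, hQ v hv, var_link hbv]

theorem hasProjectiveDimensionLE_vars {ws : List V} (hws : ws.Nodup) :
    HasProjectiveDimensionLE (stanleyReisner K (vars ws)) ws.length := by
  induction ws with
  | nil =>
    have hfree : Module.Projective (MvPolynomial V K)
        (MvPolynomial V K ⧸ squarefreeIdeal K (⊥ : Nonfaces V)) :=
      .of_equiv (Submodule.quotEquivOfEqBot _ squarefreeIdeal_bot).symm
    have : Projective (stanleyReisner K (⊥ : Nonfaces V)) :=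
      (IsProjective.iff_projective _).1 hfree
    exact inferInstanceAs (HasProjectiveDimensionLT (stanleyReisner K (⊥ : Nonfaces V)) 1)
  | cons v ws ih =>
    obtain ⟨hv, hws⟩ := List.nodup_cons.1 hws
    rw [vars_cons, sup_comm]
    exact hasProjectiveDimensionLE_sup_var (vars_link (by rintro w hw rfl; exact hv hw)) (ih hws)

theorem hasProjectiveDimensionLE_vars_path {ws l : List V} (h : (ws ++ l).Nodup)
    (he : ws.length + 2 * l.length / 3 ≤ e) :
    HasProjectiveDimensionLE (stanleyReisner K (vars ws ⊔ path l)) e := by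
  obtain ⟨hws, hl, hdisj⟩ := List.nodup_append'.1 h
  refine hasProjectiveDimensionLE_sup_path hl (fun v hv => ?_)
    (hasProjectiveDimensionLE_vars hws) he
  exact vars_link (by rintro w hw rfl; exact hdisj hw hv)

theorem hasProjectiveDimensionLE_vars_path_path {ws l l' : List V} (h : (ws ++ l ++ l').Nodup)
    (he : ws.length + 2 * l.length / 3 + 2 * l'.length / 3 ≤ e) :
    HasProjectiveDimensionLE (stanleyReisner K (vars ws ⊔ path l ⊔ path l')) e := by
  obtain ⟨hws, hl, hdisj⟩ := List.nodup_append'.1 h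
  refine hasProjectiveDimensionLE_sup_path hl (fun v hv => ?_)
    (hasProjectiveDimensionLE_vars_path hws le_rfl) he
  rw [link_sup, vars_link, path_link] <;> rintro w hw rfl <;> exact hdisj (by simp [hw]) hv

theorem hasProjectiveDimensionLE_cycle_cycle {c : V} {xs ys : List V} (h : (c :: xs ++ ys).Nodup)
    (hx : 2 ≤ xs.length) (hy : 2 ≤ ys.length)
    (h₁ : 2 * (xs.length + 1) / 3 + 2 * (ys.length + 1) / 3 ≤ e)
    (h₂ : 1 + 2 * xs.length / 3 + 2 * ys.length / 3 ≤ e) :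
    HasProjectiveDimensionLE (stanleyReisner K (cycle c xs ⊔ cycle c ys)) e := by
  refine hasProjectiveDimensionLE_of_link c ?_ ?_
  · obtain ⟨a, w, z, rfl⟩ := exists_eq_cons_append_singleton hx
    obtain ⟨a', w', z', rfl⟩ := exists_eq_cons_append_singleton hy
    have hvars : vars [a, z] ⊔ path w ⊔ (vars [a', z'] ⊔ path w') =
        vars [a, z, a', z'] ⊔ path w ⊔ path w' := by
      ext u
      simp only [vars_cons, vars_nil, sup_apply, var_apply, bot_apply]
      tauto
    have hc := (List.nodup_cons.1 h).1
    have hn : ([a, z, a', z'] ++ w ++ w').Nodup := by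
      simp only [List.cons_append, List.nodup_cons, List.nodup_append', List.mem_cons,
        List.mem_append, List.disjoint_left, List.nil_append, List.append_assoc,
        List.not_mem_nil, or_false, not_or, List.nodup_nil] at h ⊢
      clear hc
      grind only
    rw [link_sup, cycle_link_singleton fun hmem => hc (List.mem_append_left _ hmem),
      cycle_link_singleton fun hmem => hc (List.mem_append_right _ hmem), hvars]
    refine hasProjectiveDimensionLE_vars_path_path hn ?_
    simp only [List.length_cons, List.length_append, List.length_nil] at h₁ ⊢
    lia
  · have hvars : cycle c xs ⊔ cycle c ys ⊔ var c = vars [c] ⊔ path xs ⊔ path ys := by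
      rw [sup_comm, ← sup_assoc, var_sup_cycle, sup_right_comm, var_sup_cycle, vars_cons, vars_nil,
        Nonfaces.sup_bot, sup_right_comm]
    rw [hvars]
    exact hasProjectiveDimensionLE_vars_path_path h h₂

end ProjectiveDimension

section AraLEMod

variable {R : Type*} [CommRing R]

/-- The ideal `J` contains at most `s` elements which generate it up to radical modulo `g`; for
`g = 0` this bounds the arithmetical rank. -/
def AraLEMod (J : Ideal R) (g : R) (s : ℕ) : Prop :=
  ∃ F : List R, F.length ≤ s ∧ Ideal.ofList F ≤ J ∧
    ∀ P : Ideal R, P.IsPrime → g ∈ P → Ideal.ofList F ≤ P → J ≤ P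

namespace AraLEMod

variable {J J' : Ideal R} {g : R} {s t : ℕ}

theorem mono (h : AraLEMod J g s) (hst : s ≤ t) : AraLEMod J g t := by
  obtain ⟨F, hF, h⟩ := h
  exact ⟨F, hF.trans hst, h⟩

theorem of_zero (h : AraLEMod J 0 s) : AraLEMod J g s := by
  obtain ⟨F, hF, hFJ, hP⟩ := h
  exact ⟨F, hF, hFJ, fun P hPprime _ => hP P hPprime P.zero_mem⟩

theorem bot : AraLEMod (⊥ : Ideal R) g 0 :=
  ⟨[], le_rfl, by simp, fun _ _ _ _ => bot_le⟩

theorem sup (h : AraLEMod J g s) (h' : AraLEMod J' g t) : AraLEMod (J ⊔ J') g (s + t) := by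
  obtain ⟨F, hF, hFJ, hP⟩ := h
  obtain ⟨F', hF', hFJ', hP'⟩ := h'
  refine ⟨F ++ F', by simp only [List.length_append]; lia, ?_, fun P hPprime hg hFP => ?_⟩
  · rw [Ideal.ofList_append]
    exact sup_le_sup hFJ hFJ'
  · rw [Ideal.ofList_append, sup_le_iff] at hFP
    exact sup_le (hP P hPprime hg hFP.1) (hP' P hPprime hg hFP.2)

theorem zero_of_mem (hg : g ∈ J) (h : AraLEMod J g s) : AraLEMod J 0 (s + 1) := by
  obtain ⟨F, hF, hFJ, hP⟩ := h
  refine ⟨g :: F, by simpa using hF, ?_, fun P hPprime _ hFP => ?_⟩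
  · rw [Ideal.ofList_cons]
    exact sup_le ((Ideal.span_singleton_le_iff_mem J).2 hg) hFJ
  · rw [Ideal.ofList_cons, sup_le_iff, Ideal.span_singleton_le_iff_mem] at hFP
    exact hP P hPprime hFP.1 hFP.2

end AraLEMod

section Prime

variable {P : Ideal R} {x y z w : R}

theorem mul_mem_left_of_add_mem (hP : P.IsPrime) (h : y * z ∈ P) (h' : x * y + z * w ∈ P) :
    x * y ∈ P := by
  refine hP.mem_of_pow_mem 2 ?_
  have hsq : (x * y) ^ 2 = x * y * (x * y + z * w) - x * w * (y * z) := by ring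
  rw [hsq]
  exact P.sub_mem (P.mul_mem_left _ h') (P.mul_mem_left _ h)

theorem mul_mem_right_of_add_mem (hP : P.IsPrime) (h : y * z ∈ P) (h' : x * y + z * w ∈ P) :
    z * w ∈ P :=
  (P.add_mem_iff_right (mul_mem_left_of_add_mem hP h h')).1 h'

end Prime

/-- The Schmitt–Vogel trick: `xy + zw` replaces both `xy` and `zw` when `yz` is available. -/
theorem AraLEMod.sup_sup {I J J' : Ideal R} {x y z w : R} {r s t : ℕ} (h : AraLEMod I 0 r)
    (hyz : y * z ∈ I) (hxy : x * y ∈ J) (hJ : AraLEMod J (x * y) s) (hzw : z * w ∈ J')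
    (hJ' : AraLEMod J' (z * w) t) : AraLEMod (I ⊔ J ⊔ J') 0 (r + s + t + 1) := by
  have hmem : x * y + z * w ∈ I ⊔ J ⊔ J' :=
    add_mem (Ideal.mem_sup_left (Ideal.mem_sup_right hxy)) (Ideal.mem_sup_right hzw)
  refine zero_of_mem hmem ?_
  obtain ⟨F, hF, hFI, hP⟩ := h
  obtain ⟨F', hF', hFJ', hP'⟩ := hJ
  obtain ⟨F'', hF'', hFJ'', hP''⟩ := hJ'
  refine ⟨F ++ F' ++ F'', by simp only [List.length_append]; lia, ?_,
    fun P hPprime hsum hFP => ?_⟩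
  · rw [Ideal.ofList_append, Ideal.ofList_append]
    exact sup_le_sup (sup_le_sup hFI hFJ') hFJ''
  · rw [Ideal.ofList_append, Ideal.ofList_append, sup_le_iff, sup_le_iff] at hFP
    obtain ⟨⟨hF, hF'⟩, hF''⟩ := hFP
    have hI := hP P hPprime P.zero_mem hF
    exact sup_le (sup_le hI (hP' P hPprime (mul_mem_left_of_add_mem hPprime (hI hyz) hsum) hF'))
      (hP'' P hPprime (mul_mem_right_of_add_mem hPprime (hI hyz) hsum) hF'')

end AraLEMod

namespace Nonfaces

variable {V : Type*} {a b c z : V} {l : List V}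

theorem path_cons (hb : b ∈ l.head?) : path (a :: l) = edge a b ⊔ path l := by
  obtain _ | ⟨b', l⟩ := l
  · simp at hb
  · obtain rfl : b' = b := by simpa using hb
    rw [path_cons_cons]

theorem path_concat (hz : z ∈ l.getLast?) : path (l ++ [a]) = path l ⊔ edge z a := by
  obtain ⟨l, rfl⟩ := List.getLast?_eq_some_iff.1 hz
  rw [List.append_assoc, List.singleton_append, path_append_pair]

theorem cycle_cons (hb : b ∈ l.head?) (hz : z ∈ l.getLast?) :
    cycle c (a :: l) = edge c a ⊔ (edge a b ⊔ path l ⊔ edge z c) := by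
  have hb' : b ∈ (l ++ [c]).head? := by simp [List.head?_append, Option.mem_def.1 hb]
  rw [cycle, List.cons_append, List.cons_append, path_cons_cons, path_cons hb', path_concat hz,
    sup_assoc (edge a b)]

end Nonfaces

section PrimeSquarefree

open Nonfaces

variable {K : Type*} [CommRing K] {V : Type*} {a b : V} {Q : Nonfaces V}
  {P : Ideal (MvPolynomial V K)}

theorem squarefreeIdeal_mono {Q Q' : Nonfaces V} (h : Q ≤ Q') :
    squarefreeIdeal K Q ≤ squarefreeIdeal K Q' :=
  fun _ hp => mem_squarefreeIdeal.2 fun m hm => h _ (mem_squarefreeIdeal.1 hp m hm)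

theorem X_mul_X_mem_squarefreeIdeal (h : Q {a, b}) :
    (X a * X b : MvPolynomial V K) ∈ squarefreeIdeal K Q := by
  rw [X, X, monomial_mul, one_mul]
  refine monomial_mem_squarefreeIdeal ?_
  rwa [coe_support_add, Finsupp.support_single _ one_ne_zero, Finsupp.support_single _ one_ne_zero,
    Finset.coe_singleton, Finset.coe_singleton, Set.singleton_union]

theorem squarefreeIdeal_edge_le_iff (hP : P.IsPrime) :
    squarefreeIdeal K (edge a b) ≤ P ↔ X a * X b ∈ P := by
  rw [edge, squarefreeIdeal_inf, hP.inf_le, squarefreeIdeal_var, squarefreeIdeal_var,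
    Ideal.span_singleton_le_iff_mem, Ideal.span_singleton_le_iff_mem,
    hP.mul_mem_iff_mem_or_mem]

theorem squarefreeIdeal_sup_le_iff {Q Q' : Nonfaces V} :
    squarefreeIdeal K (Q ⊔ Q') ≤ P ↔ squarefreeIdeal K Q ≤ P ∧ squarefreeIdeal K Q' ≤ P := by
  rw [squarefreeIdeal_sup, sup_le_iff]

theorem araLEMod_edge_self :
    AraLEMod (squarefreeIdeal K (edge a b)) (X a * X b) 0 :=
  ⟨[], le_rfl, by simp, fun _ hP h _ => (squarefreeIdeal_edge_le_iff hP).2 h⟩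

theorem araLEMod_edge : AraLEMod (squarefreeIdeal K (edge a b)) 0 1 :=
  araLEMod_edge_self.zero_of_mem (X_mul_X_mem_squarefreeIdeal (by simp))

theorem araLEMod_path_four_mid {a b c d : V} :
    AraLEMod (squarefreeIdeal K (path [a, b, c, d])) (X b * X c) 1 := by
  refine ⟨[X a * X b + X c * X d], le_rfl, ?_, fun P hP hbc h => ?_⟩
  · rw [Ideal.ofList_singleton, Ideal.span_singleton_le_iff_mem]
    exact add_mem (X_mul_X_mem_squarefreeIdeal (by simp)) (X_mul_X_mem_squarefreeIdeal (by simp))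
  · rw [Ideal.ofList_singleton, Ideal.span_singleton_le_iff_mem] at h
    simp only [path_cons_cons, path_singleton, squarefreeIdeal_sup_le_iff,
      squarefreeIdeal_edge_le_iff hP, squarefreeIdeal_bot]
    exact ⟨mul_mem_left_of_add_mem hP hbc h, hbc, mul_mem_right_of_add_mem hP hbc h, bot_le⟩

theorem araLEMod_path_four {a b c d : V} :
    AraLEMod (squarefreeIdeal K (path [a, b, c, d])) 0 2 :=
  araLEMod_path_four_mid.zero_of_mem (X_mul_X_mem_squarefreeIdeal (by simp))

theorem araLEMod_path (l : List V) :
    AraLEMod (squarefreeIdeal K (path l)) 0 (2 * l.length / 3) := by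
  match l with
  | [] | [_] =>
    simp only [path_nil, path_singleton, squarefreeIdeal_bot]
    exact AraLEMod.bot.mono (Nat.zero_le _)
  | [a, b] =>
    rw [path_cons_cons, path_singleton, Nonfaces.sup_bot]
    exact araLEMod_edge.mono (by simp)
  | [a, b, c] =>
    rw [path_cons_cons, path_cons_cons, path_singleton, Nonfaces.sup_bot, squarefreeIdeal_sup]
    exact (araLEMod_edge.sup araLEMod_edge).mono (by simp)
  | a :: b :: c :: d :: l =>
    have hsplit : path (a :: b :: c :: d :: l) = path [a, b, c, d] ⊔ path (d :: l) := by
      simp only [path_cons_cons, path_singleton, Nonfaces.sup_bot, sup_assoc]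
    rw [hsplit, squarefreeIdeal_sup]
    refine (araLEMod_path_four.sup (araLEMod_path (d :: l))).mono ?_
    simp only [List.length_cons]
    lia

/-- The generators, besides the edge `cy`, for the cycle `c, y, b, L` of length `2` modulo `3`
ending at `c`; here `p = yb`, `q = ba` and `a` is the head of `L`. -/
noncomputable def cycleForms (p q : MvPolynomial V K) : List V → List (MvPolynomial V K)
  | a :: b :: c :: d :: l =>
    (X a * X b - X c * X d) :: (X b * X c - (p + q)) :: cycleForms p q (d :: l)
  | [a, b, c] => [X a * X b - p, X b * X c - q]
  | _ => []

theorem length_cycleForms_le (p q : MvPolynomial V K) (l : List V) :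
    (cycleForms p q l).length ≤ 2 * l.length / 3 := by
  match l with
  | a :: b :: c :: d :: l =>
    have ih := length_cycleForms_le p q (d :: l)
    simp only [cycleForms, List.length_cons] at ih ⊢
    lia
  | [_, _, _] | [] | [_] | [_, _] => simp [cycleForms]

theorem ofList_cycleForms_le {p q : MvPolynomial V K} {I : Ideal (MvPolynomial V K)} (hp : p ∈ I)
    (hq : q ∈ I) {l : List V} (hl : squarefreeIdeal K (path l) ≤ I) :
    Ideal.ofList (cycleForms p q l) ≤ I := by
  have hX {a b : V} (h : path l {a, b}) : (X a * X b : MvPolynomial V K) ∈ I :=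
    hl (X_mul_X_mem_squarefreeIdeal h)
  match l with
  | a :: b :: c :: d :: l =>
    have hdl : squarefreeIdeal K (path (d :: l)) ≤ I := by
      simp only [path_cons_cons, squarefreeIdeal_sup_le_iff] at hl
      exact hl.2.2.2
    simp only [cycleForms, Ideal.ofList_cons, sup_le_iff, Ideal.span_singleton_le_iff_mem]
    exact ⟨sub_mem (hX (by simp)) (hX (by simp)), sub_mem (hX (by simp)) (add_mem hp hq),
      ofList_cycleForms_le hp hq hdl⟩
  | [a, b, c] =>
    simp only [cycleForms, Ideal.ofList_cons, Ideal.ofList_nil, sup_le_iff,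
      Ideal.span_singleton_le_iff_mem]
    exact ⟨sub_mem (hX (by simp)) hp, sub_mem (hX (by simp)) hq, bot_le⟩
  | [] | [_] | [_, _] => simp [cycleForms]

theorem list_induction_three {α : Type*} {motive : ∀ l : List α, l ≠ [] → 3 ∣ l.length → Prop}
    (triple : ∀ a b c h h', motive [a, b, c] h h')
    (step : ∀ a b c d l h h₃ h' h₃', motive (d :: l) h h₃ → motive (a :: b :: c :: d :: l) h' h₃')
    (l : List α) (hl : l ≠ []) (h3 : 3 ∣ l.length) : motive l hl h3 := by
  match l with
  | a :: b :: c :: d :: l =>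
    have h3' : 3 ∣ (d :: l).length := by simp only [List.length_cons] at h3 ⊢; lia
    exact step a b c d l (by simp) h3' _ _ (list_induction_three triple step (d :: l) _ h3')
  | [a, b, c] => exact triple a b c _ _
  | [] => exact absurd rfl hl
  | [_] | [_, _] => simp at h3

section CycleForms

variable {p q : MvPolynomial V K} {l : List V}

theorem ofList_cycleForms_cons_le_iff {c d : V} :
    Ideal.ofList (cycleForms p q (a :: b :: c :: d :: l)) ≤ P ↔
      X a * X b - X c * X d ∈ P ∧ X b * X c - (p + q) ∈ P ∧
        Ideal.ofList (cycleForms p q (d :: l)) ≤ P := by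
  simp only [cycleForms, Ideal.ofList_cons, sup_le_iff, Ideal.span_singleton_le_iff_mem]

theorem ofList_cycleForms_triple_le_iff {c : V} :
    Ideal.ofList (cycleForms p q [a, b, c]) ≤ P ↔ X a * X b - p ∈ P ∧ X b * X c - q ∈ P := by
  simp only [cycleForms, Ideal.ofList_cons, Ideal.ofList_nil, sup_le_iff,
    Ideal.span_singleton_le_iff_mem, bot_le, and_true]

theorem squarefreeIdeal_path_le_of_cycleForms (hP : P.IsPrime) (hp : p ∈ P) (hq : q ∈ P)
    (hl : l ≠ []) (h3 : 3 ∣ l.length) (h : Ideal.ofList (cycleForms p q l) ≤ P) :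
    squarefreeIdeal K (path l) ≤ P := by
  induction l, hl, h3 using list_induction_three with
  | triple a b c =>
    obtain ⟨hab, hbc⟩ := ofList_cycleForms_triple_le_iff.1 h
    simp only [path_cons_cons, path_singleton, squarefreeIdeal_sup_le_iff,
      squarefreeIdeal_edge_le_iff hP, squarefreeIdeal_bot]
    exact ⟨(P.sub_mem_iff_left hp).1 hab, (P.sub_mem_iff_left hq).1 hbc, bot_le⟩
  | step a b c d l _ _ _ _ ih =>
    obtain ⟨habcd, hbc, hl⟩ := ofList_cycleForms_cons_le_iff.1 h
    have hbc : X b * X c ∈ P := (P.sub_mem_iff_left (P.add_mem hp hq)).1 hbc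
    have hab : X a * X b ∈ P := by
      refine mul_mem_left_of_add_mem (w := -X d) hP hbc ?_
      rwa [mul_neg, ← sub_eq_add_neg]
    have hcd : X c * X d ∈ P := (P.sub_mem_iff_right hab).1 habcd
    rw [path_cons_cons, path_cons_cons, path_cons_cons]
    simp only [squarefreeIdeal_sup_le_iff, squarefreeIdeal_edge_le_iff hP]
    exact ⟨hab, hbc, hcd, ih hl⟩

theorem mem_of_X_getLast_mem (hl : l ≠ []) (h3 : 3 ∣ l.length)
    (h : Ideal.ofList (cycleForms p q l) ≤ P) (ha : a ∈ l.getLast?) (haP : X a ∈ P) : q ∈ P := by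
  induction l, hl, h3 using list_induction_three with
  | triple b c d =>
    obtain rfl : d = a := by simpa using ha
    exact (P.sub_mem_iff_right (P.mul_mem_left _ haP)).1 (ofList_cycleForms_triple_le_iff.1 h).2
  | step b c d e l _ _ _ _ ih =>
    exact ih (ofList_cycleForms_cons_le_iff.1 h).2.2 (by simpa using ha)

theorem X_head_mem (hP : P.IsPrime) (hp : p ∈ P) (hq : q ∉ P) (hl : l ≠ []) (h3 : 3 ∣ l.length)
    (h : Ideal.ofList (cycleForms p q l) ≤ P) (ha : a ∈ l.head?) : X a ∈ P := by
  induction l, hl, h3 using list_induction_three generalizing a with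
  | triple b c d =>
    obtain rfl : b = a := by simpa using ha
    obtain ⟨hbc, hcd⟩ := ofList_cycleForms_triple_le_iff.1 h
    refine (hP.mem_or_mem ((P.sub_mem_iff_left hp).1 hbc)).resolve_right fun hc => hq ?_
    exact (P.sub_mem_iff_right (P.mul_mem_right _ hc)).1 hcd
  | step b c d e l _ _ _ _ ih =>
    obtain rfl : b = a := by simpa using ha
    obtain ⟨hbcde, hcd, hl⟩ := ofList_cycleForms_cons_le_iff.1 h
    have he : X e ∈ P := ih hl (by simp)
    have hbc := (P.sub_mem_iff_left (P.mul_mem_left _ he)).1 hbcde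
    refine (hP.mem_or_mem hbc).resolve_right fun hc => hq ?_
    exact (P.add_mem_iff_right hp).1 ((P.sub_mem_iff_right (P.mul_mem_right _ hc)).1 hcd)

theorem X_head_notMem (hP : P.IsPrime) (hp : p ∉ P) (hq : q ∈ P) (hl : l ≠ [])
    (h3 : 3 ∣ l.length) (h : Ideal.ofList (cycleForms p q l) ≤ P) (ha : a ∈ l.head?) :
    X a ∉ P := by
  induction l, hl, h3 using list_induction_three generalizing a with
  | triple b c d =>
    obtain rfl : b = a := by simpa using ha
    intro hb
    exact hp <|
      (P.sub_mem_iff_right (P.mul_mem_right _ hb)).1 (ofList_cycleForms_triple_le_iff.1 h).1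
  | step b c d e l _ _ _ _ ih =>
    obtain rfl : b = a := by simpa using ha
    intro hb
    obtain ⟨hbcde, hcd, hl⟩ := ofList_cycleForms_cons_le_iff.1 h
    have he : X e ∉ P := ih hl (by simp)
    have hde := (P.sub_mem_iff_right (P.mul_mem_right _ hb)).1 hbcde
    have hd : X d ∈ P := (hP.mem_or_mem hde).resolve_right he
    exact hp ((P.add_mem_iff_left hq).1 ((P.sub_mem_iff_right (P.mul_mem_left _ hd)).1 hcd))

theorem mem_and_mem_of_cycleForms (hP : P.IsPrime) {y c : V} (hl : l ≠ []) (h3 : 3 ∣ l.length)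
    (ha : a ∈ l.head?) (hc : c ∈ l.getLast?) (hcy : X c * X y ∈ P)
    (h : Ideal.ofList (cycleForms (X y * X b) (X b * X a) l) ≤ P) :
    X y * X b ∈ P ∧ X b * X a ∈ P := by
  have hor : X y * X b ∈ P ∨ X b * X a ∈ P :=
    (hP.mem_or_mem hcy).symm.imp (P.mul_mem_right _) (mem_of_X_getLast_mem hl h3 h hc)
  have hyb : X y * X b ∈ P := by
    by_contra hyb
    have hba := hor.resolve_left hyb
    have hb := (hP.mem_or_mem hba).resolve_right (X_head_notMem hP hyb hba hl h3 h ha)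
    exact hyb (P.mul_mem_left _ hb)
  refine ⟨hyb, by_contra fun hba => hba ?_⟩
  exact P.mul_mem_left _ (X_head_mem hP hyb hba hl h3 h ha)

end CycleForms

theorem araLEMod_cycle_of_mod_three_eq_two {c y : V} {l : List V} (h3 : l.length % 3 = 2) :
    AraLEMod (squarefreeIdeal K (cycle c (y :: b :: l))) (X c * X y)
      (2 * (l.length + 1) / 3) := by
  have hL : l ++ [c] ≠ [] := by simp
  have hL3 : 3 ∣ (l ++ [c]).length := by simp only [List.length_append, List.length_singleton]; lia
  obtain ⟨a, ha⟩ : ∃ a, a ∈ (l ++ [c]).head? := ⟨_, List.head?_eq_some_head hL⟩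
  have hcycle : cycle c (y :: b :: l) =
      edge c y ⊔ (edge y b ⊔ (edge b a ⊔ path (l ++ [c]))) := by
    rw [cycle, List.cons_append, List.cons_append, List.cons_append, path_cons_cons,
      path_cons_cons, path_cons ha]
  rw [hcycle]
  refine ⟨cycleForms (X y * X b) (X b * X a) (l ++ [c]), ?_, ?_, fun P hP hcy h => ?_⟩
  · simpa using length_cycleForms_le (K := K) _ _ (l ++ [c])
  · exact ofList_cycleForms_le (X_mul_X_mem_squarefreeIdeal (by simp))
      (X_mul_X_mem_squarefreeIdeal (by simp))
      (squarefreeIdeal_mono (le_sup_of_le_right (le_sup_of_le_right le_sup_right)))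
  · obtain ⟨hyb, hba⟩ := mem_and_mem_of_cycleForms hP hL hL3 ha (by simp) hcy h
    simp only [squarefreeIdeal_sup_le_iff, squarefreeIdeal_edge_le_iff hP]
    exact ⟨hcy, hyb, hba, squarefreeIdeal_path_le_of_cycleForms hP hyb hba hL hL3 h⟩

theorem araLEMod_cycle_of_ne_nil {c y : V} {l : List V} (hl : l ≠ []) :
    AraLEMod (squarefreeIdeal K (cycle c (y :: l))) (X c * X y) (1 + 2 * l.length / 3) := by
  obtain ⟨b, hb⟩ : ∃ b, b ∈ l.head? := ⟨_, List.head?_eq_some_head hl⟩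
  obtain ⟨z, hz⟩ : ∃ z, z ∈ l.getLast? := ⟨_, List.getLast?_eq_some_getLast hl⟩
  have hcycle : cycle c (y :: l) = path [z, c, y, b] ⊔ path l := by
    rw [cycle_cons hb hz]
    ext u
    simp only [path_cons_cons, path_singleton, sup_apply, edge_apply, bot_apply]
    tauto
  rw [hcycle, squarefreeIdeal_sup]
  exact araLEMod_path_four_mid.sup (araLEMod_path l).of_zero

theorem araLEMod_cycle_cons {c y : V} {l : List V} (hl : l ≠ []) {s : ℕ}
    (hs : 2 * (l.length + 2) / 3 ≤ s + 1)
    (hs' : (l.length + 2) % 3 = 1 → 2 * (l.length + 2) / 3 ≤ s) :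
    AraLEMod (squarefreeIdeal K (cycle c (y :: l))) (X c * X y) s := by
  by_cases h3 : l.length % 3 = 0
  · obtain ⟨b, l, rfl⟩ := List.exists_cons_of_ne_nil hl
    simp only [List.length_cons] at hs h3
    exact (araLEMod_cycle_of_mod_three_eq_two (by lia)).mono (by lia)
  · exact (araLEMod_cycle_of_ne_nil hl).mono (by lia)

theorem X_mul_X_mem_cycle_cons {c y : V} {l : List V} :
    (X c * X y : MvPolynomial V K) ∈ squarefreeIdeal K (cycle c (y :: l)) := by
  refine X_mul_X_mem_squarefreeIdeal ?_
  rw [cycle, List.cons_append, List.cons_append, path_cons_cons]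
  simp

theorem araLEMod_cycle {c : V} {l : List V} (hl : 2 ≤ l.length) (h3 : (l.length + 1) % 3 ≠ 1) :
    AraLEMod (squarefreeIdeal K (cycle c l)) 0 (2 * (l.length + 1) / 3) := by
  obtain _ | ⟨y, l⟩ := l
  · simp at hl
  · simp only [List.length_cons] at hl h3 ⊢
    have hmod := araLEMod_cycle_cons (K := K) (c := c) (y := y) (l := l)
      (List.ne_nil_of_length_pos (by lia)) (s := 2 * (l.length + 2) / 3 - 1) (by lia) (by lia)
    exact (hmod.zero_of_mem X_mul_X_mem_cycle_cons).mono (by lia)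

theorem araLEMod_cycle_cycle_of_mod_three_eq_one {c : V} {xs ys : List V} (hx : 2 ≤ xs.length)
    (hy : 2 ≤ ys.length) (hx3 : (xs.length + 1) % 3 = 1) {s : ℕ}
    (hs : 2 * (ys.length + 1) / 3 ≤ s + 1)
    (hs' : (ys.length + 1) % 3 = 1 → 2 * (ys.length + 1) / 3 ≤ s) :
    AraLEMod (squarefreeIdeal K (cycle c xs ⊔ cycle c ys)) 0
      (2 * (xs.length + 1) / 3 + s + 1) := by
  obtain ⟨a, w, z, rfl⟩ := exists_eq_cons_append_singleton hx
  obtain ⟨y, l, rfl⟩ := List.exists_cons_of_ne_nil (List.ne_nil_of_length_pos (by lia) : ys ≠ [])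
  simp only [List.length_cons, List.length_append, List.length_nil] at hx hx3 hy hs hs' ⊢
  have hw : w ≠ [] := List.ne_nil_of_length_pos (by lia)
  obtain ⟨b, hb⟩ : ∃ b, b ∈ w.head? := ⟨_, List.head?_eq_some_head hw⟩
  obtain ⟨e, he⟩ : ∃ e, e ∈ w.getLast? := ⟨_, List.getLast?_eq_some_getLast hw⟩
  have hcycle : cycle c (a :: (w ++ [z])) = path [a, c, z, e] ⊔ path w ⊔ edge b a := by
    rw [cycle_cons (List.mem_head?_append_of_mem_head? hb) (z := z) (by simp), path_concat he]
    ext u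
    simp only [path_cons_cons, path_singleton, sup_apply, edge_apply, bot_apply]
    tauto
  have hpaths : AraLEMod (squarefreeIdeal K (path [a, c, z, e] ⊔ path w)) 0
      (2 + 2 * w.length / 3) := by
    rw [squarefreeIdeal_sup]
    exact araLEMod_path_four.sup (araLEMod_path w)
  have hys : AraLEMod (squarefreeIdeal K (cycle c (y :: l))) (X c * X y) s :=
    araLEMod_cycle_cons (List.ne_nil_of_length_pos (by lia)) hs hs'
  rw [hcycle, squarefreeIdeal_sup, squarefreeIdeal_sup]
  refine (hpaths.sup_sup (y := X a) (z := X c) (X_mul_X_mem_squarefreeIdeal (by simp))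
    (X_mul_X_mem_squarefreeIdeal (by simp)) araLEMod_edge_self X_mul_X_mem_cycle_cons hys).mono ?_
  lia

theorem araLEMod_cycle_cycle {c : V} {xs ys : List V} (hx : 2 ≤ xs.length) (hy : 2 ≤ ys.length)
    {s : ℕ} (hs : 2 * (xs.length + 1) / 3 + 2 * (ys.length + 1) / 3 ≤ s)
    (hs' : (xs.length + 1) % 3 = 1 → (ys.length + 1) % 3 = 1 →
      2 * (xs.length + 1) / 3 + 2 * (ys.length + 1) / 3 + 1 ≤ s) :
    AraLEMod (squarefreeIdeal K (cycle c xs ⊔ cycle c ys)) 0 s := by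
  by_cases hx3 : (xs.length + 1) % 3 = 1
  · exact (araLEMod_cycle_cycle_of_mod_three_eq_one hx hy hx3
      (s := s - 2 * (xs.length + 1) / 3 - 1) (by lia) (by lia)).mono (by lia)
  by_cases hy3 : (ys.length + 1) % 3 = 1
  · rw [sup_comm]
    exact (araLEMod_cycle_cycle_of_mod_three_eq_one hy hx hy3
      (s := s - 2 * (ys.length + 1) / 3 - 1) (by lia) (by lia)).mono (by lia)
  rw [squarefreeIdeal_sup]
  exact ((araLEMod_cycle hx hx3).sup (araLEMod_cycle hy hy3)).mono hs

end PrimeSquarefree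

namespace Nonfaces

variable {V : Type*} {Q : Nonfaces V} {S T : Set V} {a b c v : V} {l ws ws' : List V}

theorem link_link : (Q.link S).link T = Q.link (S ∪ T) := by
  ext u
  rw [link_apply, link_apply, link_apply, Set.union_assoc, Set.union_comm T]

theorem vars_append : vars (ws ++ ws') = vars ws ⊔ vars ws' := by
  ext u
  simp only [vars_apply, sup_apply, List.mem_append, or_and_right, exists_or]

theorem var_le_vars (h : v ∈ ws) : var v ≤ vars ws := fun _ hu => vars_apply.2 ⟨v, h, hu⟩

/-- The vertices of a path outside a dominating set: setting the variables of the dominating set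
to `1` leaves the ideal generated by the variables of these vertices. -/
def dominated : List V → List V
  | a :: _ :: c :: l => a :: c :: dominated l
  | [_, b] => [b]
  | _ => []

theorem dominated_sublist (l : List V) : (dominated l).Sublist l :=
  match l with
  | [] | [_] => List.nil_sublist _
  | [_, _] => (List.Sublist.refl _).cons _
  | _ :: _ :: _ :: l => (((dominated_sublist l).cons_cons _).cons _).cons_cons _

theorem length_dominated (l : List V) : (dominated l).length = 2 * l.length / 3 :=
  match l with
  | [] | [_] | [_, _] => by simp [dominated]
  | _ :: _ :: _ :: l => by
    simp only [dominated, List.length_cons, length_dominated l]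
    lia

theorem mem_dominated_of_mem_ends {l : List V} (h3 : 3 ∣ l.length)
    (hv : v ∈ l.head? ∨ v ∈ l.getLast?) : v ∈ dominated l := by
  match l with
  | [] => simp at hv
  | [_] | [_, _] => simp at h3
  | [a, _, c] => simpa [dominated, eq_comm] using hv
  | a :: _ :: c :: d :: l =>
    have ih : v ∈ (d :: l).getLast? → v ∈ dominated (d :: l) := fun hv =>
      mem_dominated_of_mem_ends (by simp only [List.length_cons] at h3 ⊢; lia) (Or.inr hv)
    rw [dominated, List.mem_cons, List.mem_cons]
    exact hv.imp (by simp [eq_comm]) fun hv => Or.inr (ih (by simpa using hv))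

theorem path_link_eq_vars_dominated {l : List V} (hl : l.Nodup)
    (hS : ∀ v ∈ l, v ∈ S ↔ v ∉ dominated l) : (path l).link S = vars (dominated l) := by
  match l with
  | [] | [_] =>
    simp only [path_nil, path_singleton, dominated]
    rfl
  | [a, b] =>
    ext u
    simp_all [dominated]
  | a :: b :: c :: l =>
    obtain ⟨⟨hab, hac, hal⟩, ⟨hbc, hbl⟩, hcl, hl⟩ := by
      simpa only [List.nodup_cons, List.mem_cons, not_or] using hl
    obtain ⟨ha, hb, hc, hS⟩ := by simpa only [List.forall_mem_cons] using hS
    have haS : a ∉ S := fun h => ha.1 h (by simp [dominated])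
    have hcS : c ∉ S := fun h => hc.1 h (by simp [dominated])
    have hbl' : b ∉ dominated l := fun h => hbl ((dominated_sublist l).subset h)
    have hbS : b ∈ S := hb.2 (by simp [dominated, Ne.symm hab, hbc, hbl'])
    have hlS : ∀ v ∈ l, v ∈ S ↔ v ∉ dominated l := fun v hv => by
      rw [hS v hv, dominated, List.mem_cons, List.mem_cons, or_iff_right, or_iff_right] <;>
        rintro rfl <;> contradiction
    rw [← Set.union_eq_self_of_subset_left (Set.singleton_subset_iff.2 hbS), ← link_link,
      path_link_second hab (by simp [hbc, hbl]), link_sup, link_sup, var_link haS, var_link hcS,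
      path_link_eq_vars_dominated hl hlS, dominated, vars_cons, vars_cons, sup_assoc]

/-- The nonfaces whose intersection with those of the path `y₁, y₂, y₃, l, c` with the variables of
`y₁` and `y₃` are the nonfaces of the cycle `c, y₁, y₂, y₃, l, c`. -/
noncomputable def pendant (ws : List V) (c y₁ y₂ y₃ : V) (l : List V) : Nonfaces V :=
  vars (y₂ :: ws) ⊔ edge c y₁ ⊔ path (y₃ :: (l ++ [c])) ⊔ cycle c l

variable {y₁ y₂ y₃ y₄ : V}

theorem pendant_nil : pendant ws c y₁ y₂ y₃ [] = vars (y₂ :: c :: ws) := by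
  ext u
  simp only [pendant, cycle, List.nil_append, List.cons_append, vars_cons, path_cons_cons,
    path_singleton, sup_apply, var_apply, edge_apply, bot_apply]
  tauto

theorem pendant_cons : pendant ws c y₁ y₂ y₃ (y₄ :: l) =
    vars (y₂ :: ws) ⊔ path [y₁, c, y₄, y₃] ⊔ path (y₄ :: (l ++ [c])) := by
  ext u
  simp only [pendant, cycle, List.cons_append, path_cons_cons, path_singleton, sup_apply,
    edge_apply, bot_apply]
  tauto

theorem vars_path_inf_pendant : (vars (y₁ :: y₃ :: ws) ⊔ path (l ++ [c])) ⊓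
    pendant ws c y₁ y₂ y₃ l = vars ws ⊔ cycle c (y₁ :: y₂ :: y₃ :: l) := by
  obtain ⟨b, t, ht⟩ := List.exists_cons_of_ne_nil (l := l ++ [c]) (by simp)
  ext u
  simp only [pendant, cycle, List.cons_append, ht, vars_cons, path_cons_cons, sup_apply, inf_apply,
    var_apply, edge_apply]
  grind only

theorem vars_path_sup_pendant : (vars (y₁ :: y₃ :: ws) ⊔ path (l ++ [c])) ⊔
    pendant ws c y₁ y₂ y₃ l = vars (y₁ :: y₂ :: y₃ :: ws) ⊔ cycle c l := by
  obtain ⟨b, t, ht⟩ := List.exists_cons_of_ne_nil (l := l ++ [c]) (by simp)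
  ext u
  simp only [pendant, cycle, List.cons_append, ht, vars_cons, path_cons_cons, sup_apply,
    var_apply, edge_apply]
  grind only

theorem vars_sup_cycle_nil : vars ws ⊔ cycle c [] = vars (c :: ws) := by
  ext u
  simp only [cycle, List.cons_append, List.nil_append, path_cons_cons, path_singleton, vars_cons,
    sup_apply, var_apply, edge_apply, bot_apply]
  tauto

/-- The Mayer–Vietoris descent common to the two lower bounds, in which `Van Q i` stands for a
vanishing property, in degree `i`, of the Stanley–Reisner ideal of `Q`. -/
theorem not_vars_sup_cycle {p : V → Prop} {Van : Nonfaces V → ℕ → Prop}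
    (hsup : ∀ {A B : Nonfaces V} {i : ℕ},
      Van (A ⊓ B) i → Van A (i + 1) → Van B (i + 1) → Van (A ⊔ B) (i + 1))
    (hpath : ∀ {ws l : List V} {i : ℕ}, (ws ++ l).Nodup →
      ws.length + 2 * l.length / 3 ≤ i → Van (vars ws ⊔ path l) i)
    (hpendant : ∀ {ws : List V} {c y₁ y₂ y₃ : V} {l : List V} {i : ℕ},
      (c :: y₁ :: y₂ :: y₃ :: l ++ ws).Nodup → 3 ∣ l.length →
        ws.length + 2 * l.length / 3 + 3 ≤ i → Van (pendant ws c y₁ y₂ y₃ l) i)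
    (hvars : ∀ {v : V} {ws : List V}, (v :: ws).Nodup → (∀ w ∈ v :: ws, p w) →
      ¬ Van (vars (v :: ws)) ws.length) {ws : List V} {c : V} {l : List V}
    (h : (c :: l ++ ws).Nodup) (hp : ∀ w ∈ c :: l ++ ws, p w) (h3 : 3 ∣ l.length) :
    ¬ Van (vars ws ⊔ cycle c l) (ws.length + 2 * l.length / 3) := by
  match l with
  | [] =>
    rw [vars_sup_cycle_nil]
    simpa using hvars h hp
  | [_] | [_, _] => simp at h3
  | y₁ :: y₂ :: y₃ :: l =>
    intro hvan
    have h3 : 3 ∣ l.length := by simpa [Nat.dvd_add_left] using h3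
    have hperm : (c :: l ++ (y₁ :: y₂ :: y₃ :: ws)).Perm (c :: y₁ :: y₂ :: y₃ :: l ++ ws) :=
      (List.perm_append_comm_assoc l [y₁, y₂, y₃] ws).cons c
    refine not_vars_sup_cycle hsup hpath hpendant hvars (hperm.nodup_iff.2 h)
      (fun w hw => hp w (hperm.mem_iff.1 hw)) h3 ?_
    rw [← vars_path_sup_pendant,
      show (y₁ :: y₂ :: y₃ :: ws).length + 2 * l.length / 3 =
        ws.length + 2 * (l.length + 3) / 3 + 1 by simp only [List.length_cons]; lia]
    refine hsup ?_ (hpath ?_ ?_) (hpendant h h3 ?_)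
    · rwa [vars_path_inf_pendant]
    · simp only [List.cons_append, List.nodup_cons, List.nodup_append', List.mem_cons,
        List.mem_append, List.disjoint_left] at h ⊢
      grind
    · simp only [List.length_cons, List.length_append, List.length_nil]
      lia
    · lia

/-- The projective dimension and the arithmetical rank of the edge ideal of two cycles of lengths
`n` and `m` sharing a vertex. -/
def twoCycleRank (n m : ℕ) : ℕ :=
  2 * n / 3 + 2 * m / 3 + if n % 3 = 1 ∧ m % 3 = 1 then 1 else 0

variable {xs ys l l' : List V} {z a' z' : V}

theorem cycle_link_eq_vars (h : (c :: xs).Nodup) (hx : 3 ∣ xs.length) (hne : xs ≠ []) (hcS : c ∉ S)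
    (hS : ∀ v ∈ xs, v ∈ S ↔ v ∉ dominated xs) :
    (cycle c xs).link S = vars (dominated xs) := by
  obtain ⟨a, t, z, hxs⟩ : ∃ a t z, xs = a :: (t ++ [z]) :=
    exists_eq_cons_append_singleton (by have := List.length_pos_iff.2 hne; lia)
  have ha : a ∈ dominated xs := mem_dominated_of_mem_ends hx (by simp [hxs])
  have hz : z ∈ dominated xs := mem_dominated_of_mem_ends hx <| Or.inr <| by
    rw [hxs, ← List.cons_append, List.getLast?_concat, Option.mem_def]
  have hedge {v : V} (hv : v ∈ dominated xs) : (edge c v).link S ≤ vars (dominated xs) := by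
    intro u hu
    have hvS : v ∉ S := fun h => (hS v ((dominated_sublist xs).subset hv)).1 h hv
    simp only [link_apply, edge_apply, Set.mem_union, hcS, hvS, or_false] at hu
    exact var_le_vars hv u hu.2
  have hpath := path_link_eq_vars_dominated (List.nodup_cons.1 h).2 hS
  have hcomm : edge z c = edge c z := by
    ext u
    exact and_comm
  rw [hxs] at hpath
  rw [hxs, cycle_cons_concat, link_sup, link_sup, hpath, ← hxs, hcomm,
    sup_eq_right.2 (hedge ha), sup_eq_left.2 (hedge hz)]

theorem cycle_link_eq_vars_of_mem (h : (c :: a :: (l ++ [z])).Nodup) (hc : c ∈ S) (ha : a ∉ S)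
    (hz : z ∉ S) (hS : ∀ v ∈ l, v ∈ S ↔ v ∉ dominated l) :
    (cycle c (a :: (l ++ [z]))).link S = vars (a :: (dominated l ++ [z])) := by
  obtain ⟨hcl, -, hlz⟩ := by simpa only [List.nodup_cons] using h
  rw [← Set.union_eq_self_of_subset_left (Set.singleton_subset_iff.2 hc), ← link_link,
    cycle_link_singleton hcl, link_sup, vars_link (by simp [ha, hz]),
    path_link_eq_vars_dominated (List.nodup_append'.1 hlz).1 hS, vars_cons, sup_assoc,
    sup_comm (vars [z]), ← vars_append, ← vars_cons]

theorem cycle_link (h : ∀ v ∈ c :: xs, v ∉ S) : (cycle c xs).link S = cycle c xs :=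
  path_link fun v hv => h v (by simpa [or_comm] using hv)

theorem exists_link_eq_vars_sup_cycle_of_dvd (h : (c :: xs ++ ys).Nodup) (hne : xs ≠ [])
    (hx : 3 ∣ xs.length) :
    ∃ S : Set V, (c :: ys ++ dominated xs).Nodup ∧ (∀ v ∈ c :: ys ++ dominated xs, v ∉ S) ∧
      (cycle c xs ⊔ cycle c ys).link S = vars (dominated xs) ⊔ cycle c ys := by
  obtain ⟨hcx, -, hdisj⟩ := List.nodup_append'.1 h
  have hsub := dominated_sublist xs
  refine ⟨{v | v ∉ c :: ys ++ dominated xs}, ?_, fun v hv => not_not_intro hv, ?_⟩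
  · exact (List.perm_append_comm.cons c).nodup_iff.1
      (h.sublist ((hsub.append_right ys).cons_cons c))
  · rw [link_sup, cycle_link_eq_vars hcx hx hne, cycle_link]
    · exact fun v hv => not_not_intro (List.mem_append_left _ hv)
    · exact not_not_intro (by simp)
    · intro v hv
      have hvc : v ≠ c := by
        rintro rfl
        exact (List.nodup_cons.1 hcx).1 hv
      have hvy : v ∉ ys := hdisj (List.mem_cons_of_mem c hv)
      simp [hvc, hvy]

theorem exists_link_eq_vars (h : (c :: (a :: (l ++ [z])) ++ (a' :: (l' ++ [z']))).Nodup) :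
    ∃ S : Set V, (a :: (dominated l ++ [z]) ++ a' :: (dominated l' ++ [z'])).Nodup ∧
      (∀ v ∈ a :: (dominated l ++ [z]) ++ a' :: (dominated l' ++ [z']), v ∉ S) ∧
      (cycle c (a :: (l ++ [z])) ⊔ cycle c (a' :: (l' ++ [z']))).link S =
        vars (a :: (dominated l ++ [z]) ++ a' :: (dominated l' ++ [z'])) := by
  have hsub : (a :: (dominated l ++ [z]) ++ a' :: (dominated l' ++ [z'])).Sublist
      (a :: (l ++ [z]) ++ a' :: (l' ++ [z'])) :=
    (((dominated_sublist l).append_right [z]).cons_cons a).append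
      (((dominated_sublist l').append_right [z']).cons_cons a')
  have hn : (a :: (l ++ [z]) ++ a' :: (l' ++ [z'])).Nodup := (List.nodup_cons.1 h).2
  refine ⟨{v | v ∉ a :: (dominated l ++ [z]) ++ a' :: (dominated l' ++ [z'])}, hn.sublist hsub,
    fun v hv => not_not_intro hv, ?_⟩
  have hcS : c ∈ {v | v ∉ a :: (dominated l ++ [z]) ++ a' :: (dominated l' ++ [z'])} :=
    fun hc => (List.nodup_cons.1 h).1 (hsub.subset hc)
  have hl := fun v hv => (dominated_sublist l).subset (a := v) hv
  have hl' := fun v hv => (dominated_sublist l').subset (a := v) hv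
  rw [link_sup, cycle_link_eq_vars_of_mem (h.sublist (List.sublist_append_left _ _)) hcS,
    cycle_link_eq_vars_of_mem (h.sublist ((List.sublist_append_right _ _).cons_cons c)) hcS,
    ← vars_append]
  all_goals
    clear h hcS hsub
    simp only [List.cons_append, List.nodup_cons, List.nodup_append', List.mem_cons,
      List.mem_append, List.disjoint_left, Set.mem_ofPred_eq, List.append_assoc,
      List.not_mem_nil, or_false, not_or, List.nodup_nil] at hn ⊢
    grind only

theorem exists_link_eq_vars_sup_cycle (h : (c :: xs ++ ys).Nodup) (hx : 2 ≤ xs.length)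
    (hy : 2 ≤ ys.length) : ∃ (S : Set V) (ws : List V) (b : V) (l : List V),
      (b :: l ++ ws).Nodup ∧ (∀ v ∈ b :: l ++ ws, v ∉ S) ∧ 3 ∣ l.length ∧
      (cycle c xs ⊔ cycle c ys).link S = vars ws ⊔ cycle b l ∧
      ws.length + 2 * l.length / 3 + 1 = twoCycleRank (xs.length + 1) (ys.length + 1) := by
  by_cases h₁ : (xs.length + 1) % 3 = 1 ∧ (ys.length + 1) % 3 = 1
  · obtain ⟨S, hn, hS, hlink⟩ := exists_link_eq_vars_sup_cycle_of_dvd h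
      (List.ne_nil_of_length_pos (by lia)) (by lia)
    refine ⟨S, dominated xs, c, ys, hn, hS, by lia, hlink, ?_⟩
    rw [length_dominated, twoCycleRank, if_pos h₁]
    lia
  · obtain ⟨a, l, z, rfl⟩ := exists_eq_cons_append_singleton hx
    obtain ⟨a', l', z', rfl⟩ := exists_eq_cons_append_singleton hy
    obtain ⟨S, hn, hS, hlink⟩ := exists_link_eq_vars h
    refine ⟨S, dominated l ++ [z] ++ a' :: (dominated l' ++ [z']), a, [], hn, hS, dvd_zero 3,
      hlink.trans vars_sup_cycle_nil.symm, ?_⟩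
    rw [twoCycleRank, if_neg h₁]
    simp only [List.length_append, List.length_cons, List.length_nil, length_dominated]
    lia

end Nonfaces

section Pendant

open Nonfaces

namespace Nonfaces

variable {V : Type*} {ws : List V} {c y₁ y₂ y₃ a z : V} {l : List V}

theorem pendant_cons_eq_sup_cycle : pendant ws c y₁ y₂ y₃ (a :: l) =
    vars (y₂ :: ws) ⊔ edge c y₁ ⊔ edge y₃ a ⊔ cycle c (a :: l) := by
  ext u
  simp only [pendant, cycle, List.cons_append, path_cons_cons, sup_apply]
  tauto

theorem pendant_link (hc : c ∉ y₁ :: y₂ :: a :: (l ++ [z]) ++ ws) :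
    (pendant ws c y₁ y₂ y₃ (a :: (l ++ [z]))).link {c} =
      vars (y₂ :: ws) ⊔ vars [y₁, a, z] ⊔ path l := by
  have hvars : ∀ v ∈ y₂ :: ws, v ∉ ({c} : Set V) := by
    rintro v hv rfl
    exact hc (by simp only [List.cons_append, List.mem_cons, List.mem_append] at hv ⊢; tauto)
  have hcycle : c ∉ a :: (l ++ [z]) := fun h =>
    hc (List.mem_append_left ws (List.mem_cons_of_mem _ (List.mem_cons_of_mem _ h)))
  have hy₁ : y₁ ≠ c := by
    rintro rfl
    exact hc (List.mem_cons_self ..)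
  have ha : a ≠ c := by
    rintro rfl
    exact hcycle (List.mem_cons_self ..)
  rw [pendant_cons_eq_sup_cycle, link_sup, link_sup, link_sup, vars_link hvars,
    cycle_link_singleton hcycle]
  ext u
  simp only [sup_apply, link_apply, edge_apply, vars_cons, vars_nil, var_apply, bot_apply,
    Set.mem_union, Set.mem_singleton_iff, hy₁, ha, or_true, or_false, true_and]
  tauto

theorem pendant_sup_var : pendant ws c y₁ y₂ y₃ (a :: l) ⊔ var c =
    vars (c :: y₂ :: ws) ⊔ path (y₃ :: a :: l) := by
  rw [pendant_cons_eq_sup_cycle, sup_assoc, sup_comm (cycle _ _), var_sup_cycle]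
  ext u
  simp only [sup_apply, edge_apply, vars_cons, var_apply, path_cons_cons]
  tauto

end Nonfaces

theorem hasProjectiveDimensionLE_pendant_nil {K V : Type u} [CommRing K] {ws : List V}
    {c y₁ y₂ y₃ : V} (h : (y₂ :: c :: ws).Nodup) :
    HasProjectiveDimensionLE (stanleyReisner K (pendant ws c y₁ y₂ y₃ [])) (ws.length + 2) := by
  rw [pendant_nil]
  exact hasProjectiveDimensionLE_vars h

theorem hasProjectiveDimensionLE_pendant {K V : Type u} [CommRing K] {ws : List V}
    {c y₁ y₂ y₃ : V} {l : List V} {e : ℕ} (h : (c :: y₁ :: y₂ :: y₃ :: l ++ ws).Nodup)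
    (h3 : 3 ∣ l.length) (he : ws.length + 2 * l.length / 3 + 3 ≤ e) :
    HasProjectiveDimensionLE (stanleyReisner K (pendant ws c y₁ y₂ y₃ l)) e := by
  obtain rfl | hl := eq_or_ne l []
  · have hws : (y₂ :: c :: ws).Nodup := by
      simp only [List.cons_append, List.nil_append, List.nodup_cons, List.mem_cons] at h ⊢
      tauto
    have := hasProjectiveDimensionLE_pendant_nil (K := K) (y₁ := y₁) (y₃ := y₃) hws
    exact hasProjectiveDimensionLT_of_ge _ (ws.length + 2 + 1) _ (by lia)
  · have hlength : 3 ≤ l.length := Nat.le_of_dvd (List.length_pos_iff.2 hl) h3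
    obtain ⟨a, l, z, rfl⟩ := exists_eq_cons_append_singleton (Nat.le_of_succ_le hlength)
    simp only [List.length_cons, List.length_append, List.length_nil] at he h3
    simp only [List.cons_append, List.nodup_cons, List.nodup_append', List.mem_cons,
      List.mem_append, List.disjoint_left, List.append_assoc, List.not_mem_nil, not_or,
      List.nodup_nil] at h
    have hc : c ∉ y₁ :: y₂ :: a :: (l ++ [z]) ++ ws := by
      simp only [List.cons_append, List.mem_cons, List.mem_append, List.append_assoc,
        List.not_mem_nil, not_or]
      grind only
    have hlink : (y₂ :: ws ++ [y₁, a, z] ++ l).Nodup := by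
      simp only [List.cons_append, List.nodup_cons, List.nodup_append', List.mem_cons,
        List.mem_append, List.disjoint_left, List.append_assoc, List.not_mem_nil, not_or,
        List.nodup_nil]
      grind only
    have hsup : (c :: y₂ :: ws ++ y₃ :: a :: (l ++ [z])).Nodup := by
      simp only [List.cons_append, List.nodup_cons, List.nodup_append', List.mem_cons,
        List.mem_append, List.disjoint_left, List.not_mem_nil, or_false, not_or, List.nodup_nil]
      grind only
    refine hasProjectiveDimensionLE_of_link c ?_ ?_
    · rw [pendant_link hc, ← vars_append]
      refine hasProjectiveDimensionLE_vars_path hlink ?_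
      simp only [List.length_cons, List.length_append, List.length_nil]
      lia
    · rw [pendant_sup_var]
      refine hasProjectiveDimensionLE_vars_path hsup ?_
      simp only [List.length_cons, List.length_append, List.length_nil]
      lia

theorem araLEMod_vars {K V : Type*} [CommRing K] (ws : List V) :
    AraLEMod (squarefreeIdeal K (vars ws)) 0 ws.length := by
  rw [squarefreeIdeal_vars]
  exact ⟨ws.map X, (List.length_map _).le, le_rfl, fun _ _ _ h => h⟩

theorem araLEMod_pendant {K V : Type*} [CommRing K] {ws : List V} {c y₁ y₂ y₃ : V} {l : List V}
    (h3 : 3 ∣ l.length) :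
    AraLEMod (squarefreeIdeal K (pendant ws c y₁ y₂ y₃ l)) 0
      (ws.length + 2 * l.length / 3 + 3) := by
  match l with
  | [] =>
    rw [pendant_nil]
    exact (araLEMod_vars _).mono (by simp only [List.length_cons]; lia)
  | y₄ :: l =>
    rw [pendant_cons, squarefreeIdeal_sup, squarefreeIdeal_sup]
    refine (((araLEMod_vars _).sup araLEMod_path_four).sup (araLEMod_path _)).mono ?_
    simp only [List.length_cons, List.length_append, List.length_nil] at h3 ⊢
    lia

end Pendant

section Point

variable {K V : Type u} [CommRing K]

open scoped Classical in
/-- The coordinate ring of the point of affine space whose coordinates are `1` on `S` and `0`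
elsewhere, as a module over the polynomial ring. -/
noncomputable abbrev pointModule (K : Type u) [CommRing K] {V : Type u} (S : Set V) :
    ModuleCat.{u} (MvPolynomial V K) :=
  ModuleCat.of (MvPolynomial V K)
    (MvPolynomial V K ⧸ RingHom.ker (aeval (R := K) fun v => if v ∈ S then (1 : K) else 0))

theorem monomial_smul_pointModule {S : Set V} {s : V →₀ ℕ} (hs : (s.support : Set V) ⊆ S)
    (n : pointModule K S) : (monomial s 1 : MvPolynomial V K) • n = n := by
  have hmem : (monomial s 1 - 1 : MvPolynomial V K) ∈
      Module.annihilator (MvPolynomial V K) (pointModule K S) := by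
    rw [Ideal.annihilator_quotient, RingHom.mem_ker, map_sub, aeval_monomial, map_one, map_one,
      one_mul, sub_eq_zero]
    exact Finset.prod_eq_one fun v hv => by simp only [if_pos (hs hv), one_pow]
  have hzero := Module.mem_annihilator.1 hmem n
  rwa [sub_smul, one_smul, sub_eq_zero] at hzero

theorem X_mem_annihilator_pointModule {S : Set V} {v : V} (hv : v ∉ S) :
    (X v : MvPolynomial V K) ∈ Module.annihilator (MvPolynomial V K) (pointModule K S) := by
  rw [Ideal.annihilator_quotient, RingHom.mem_ker, aeval_X, if_neg hv]

theorem not_subsingleton_ext_vars_pointModule [Nontrivial K] {S : Set V} {ws : List V}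
    (hws : ws.Nodup) (hS : ∀ v ∈ ws, v ∉ S) :
    ¬ Subsingleton
      (Abelian.Ext (stanleyReisner K (Nonfaces.vars ws)) (pointModule K S) ws.length) := by
  intro h
  rw [stanleyReisner, squarefreeIdeal_vars] at h
  have hext : Subsingleton (Abelian.Ext (ModuleCat.of (MvPolynomial V K) (MvPolynomial V K))
      (pointModule K S) 0) := by
    refine subsingleton_ext_of_isWeaklyRegular_left (isWeaklyRegular_map_X hws) ?_ ?_
    · simp only [List.mem_map, forall_exists_index, and_imp, forall_apply_eq_imp_iff₂]
      exact fun v hv => X_mem_annihilator_pointModule (hS v hv)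
    · rwa [smul_eq_mul, Ideal.mul_top, List.length_map, zero_add]
  have : Subsingleton (MvPolynomial V K →ₗ[MvPolynomial V K] pointModule K S) :=
    (ModuleCat.homEquiv.symm.trans (Abelian.Ext.homEquiv₀ (X := ModuleCat.of (MvPolynomial V K)
      (MvPolynomial V K)) (Y := pointModule K S)).symm).subsingleton
  have : Subsingleton (pointModule K S) := (LinearMap.ringLmapEquivSelf (MvPolynomial V K) ℤ
    (pointModule K S)).symm.subsingleton
  exact RingHom.ker_ne_top _ (Ideal.Quotient.subsingleton_iff.1 this)

end Point

section LowerBound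

open Nonfaces

variable {K V : Type u} [CommRing K] {c : V} {xs ys : List V}

theorem subsingleton_ext_link [Finite V] {Q : Nonfaces V} {S : Set V} {i : ℕ}
    (h : Subsingleton (Abelian.Ext (stanleyReisner K Q) (pointModule K S) i)) :
    Subsingleton (Abelian.Ext (stanleyReisner K (Q.link S)) (pointModule K S) i) := by
  obtain ⟨s, rfl⟩ := exists_finsupp_support_eq S
  rw [stanleyReisner, ← colon_monomial_squarefreeIdeal]
  exact subsingleton_ext_quotient_colon (monomial_smul_pointModule subset_rfl) h

theorem exists_not_subsingleton_ext_cycle_cycle [Nontrivial K] [Finite V]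
    (h : (c :: xs ++ ys).Nodup) (hx : 2 ≤ xs.length) (hy : 2 ≤ ys.length) :
    ∃ N : ModuleCat.{u} (MvPolynomial V K), ¬ Subsingleton
      (Abelian.Ext (stanleyReisner K (cycle c xs ⊔ cycle c ys)) N
        (twoCycleRank (xs.length + 1) (ys.length + 1))) := by
  obtain ⟨S, ws, b, l, hn, hS, h3, hlink, hlength⟩ := exists_link_eq_vars_sup_cycle h hx hy
  refine ⟨pointModule K S, fun hext => ?_⟩
  refine not_vars_sup_cycle (p := (· ∉ S)) (Van := fun Q i =>
      Subsingleton (Abelian.Ext (stanleyReisner K Q) (pointModule K S) (i + 1)))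
    ?_ ?_ ?_ ?_ hn hS h3 ?_
  · intro A B i hinf hA hB
    rw [stanleyReisner, squarefreeIdeal_inf] at hinf
    rw [stanleyReisner, squarefreeIdeal_sup]
    exact subsingleton_ext_quotient_sup hinf hA hB
  · exact fun hwl hi => (hasProjectiveDimensionLE_vars_path hwl hi).subsingleton _ _ _ le_rfl _
  · exact fun hwl h3 hi =>
      (hasProjectiveDimensionLE_pendant hwl h3 hi).subsingleton _ _ _ le_rfl _
  · exact fun hws hS => not_subsingleton_ext_vars_pointModule hws hS
  · rw [← hlink, hlength]
    exact subsingleton_ext_link hext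

theorem AraLEMod.exists_radical_eq {R : Type*} [CommRing R] {J : Ideal R} {s : ℕ}
    (h : AraLEMod J 0 s) : ∃ F : List R, F.length ≤ s ∧ (Ideal.ofList F).radical = J.radical := by
  obtain ⟨F, hF, hFJ, hP⟩ := h
  refine ⟨F, hF, le_antisymm (Ideal.radical_mono hFJ) (Ideal.radical_le_radical_iff.2 ?_)⟩
  rw [Ideal.radical_eq_sInf]
  exact le_sInf fun P ⟨hFP, hPprime⟩ => hP P hPprime P.zero_mem hFP

theorem AraLEMod.torsionExact {R : Type u} [CommRing R] [IsNoetherianRing R] {M : ModuleCat.{u} R}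
    (P : InjectiveResolution M) {J : Ideal R} {s : ℕ} (h : AraLEMod J 0 s) :
    TorsionExact (injectiveDiff P) J s := by
  obtain ⟨F, hF, hrad⟩ := h.exists_radical_eq
  exact (torsionExact_ofList (exact_injectiveDiff P) F hF).of_radical_eq hrad

theorem ofList_map_X_ne_top {K V : Type*} [CommRing K] [Nontrivial K] (ws : List V) :
    Ideal.ofList (ws.map X : List (MvPolynomial V K)) ≠ ⊤ := by
  refine ne_top_of_le_ne_top (RingHom.ker_ne_top (constantCoeff (σ := V) (R := K)))
    (Ideal.span_le.2 fun f hf => ?_)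
  obtain ⟨v, -, rfl⟩ := List.mem_map.1 hf
  exact constantCoeff_X K v

theorem radical_map_eq {R R' : Type*} [CommRing R] [CommRing R'] (f : R →+* R') {I J : Ideal R}
    (h : I.radical = J.radical) : (I.map f).radical = (J.map f).radical := by
  have hle {I J : Ideal R} (h : I.radical ≤ J.radical) : (I.map f).radical ≤ (J.map f).radical :=
    Ideal.radical_le_radical_iff.2 ((Ideal.map_mono (Ideal.le_radical.trans h)).trans
      (Ideal.map_radical_le f))
  exact le_antisymm (hle h.le) (hle h.ge)

theorem twoCycleRank_le_length [Nontrivial K] [IsNoetherianRing K] [Finite V]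
    (h : (c :: xs ++ ys).Nodup) (hx : 2 ≤ xs.length) (hy : 2 ≤ ys.length)
    {F : List (MvPolynomial V K)}
    (hF : (Ideal.ofList F).radical = (squarefreeIdeal K (cycle c xs ⊔ cycle c ys)).radical) :
    twoCycleRank (xs.length + 1) (ys.length + 1) ≤ F.length := by
  obtain ⟨S, ws, b, l, hn, -, h3, hlink, hlength⟩ := exists_link_eq_vars_sup_cycle h hx hy
  have P := injectiveResolution (ModuleCat.of (MvPolynomial V K) (MvPolynomial V K))
  by_contra! hlt
  refine not_vars_sup_cycle (p := fun _ => True)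
    (Van := fun Q i => TorsionExact (injectiveDiff P) (squarefreeIdeal K Q) i)
    ?_ ?_ ?_ ?_ hn (fun _ _ => trivial) h3 ?_
  · intro A B i hinf hA hB
    rw [squarefreeIdeal_inf] at hinf
    rw [squarefreeIdeal_sup]
    exact hinf.sup (fun i => (exact_injectiveDiff P i).apply_apply_eq_zero) hA hB
  · intro ws l i _ hi
    rw [squarefreeIdeal_sup]
    exact (((araLEMod_vars ws).sup (araLEMod_path l)).mono hi).torsionExact P
  · exact fun _ h3 hi => ((araLEMod_pendant h3).mono hi).torsionExact P
  · intro v ws hws _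
    rw [squarefreeIdeal_vars]
    exact not_torsionExact_of_isWeaklyRegular P (isWeaklyRegular_map_X hws) (List.length_map _)
      (ofList_map_X_ne_top _)
  · have hrad := radical_map_eq (setOne K S).toRingHom hF
    rw [← hlink]
    refine TorsionExact.of_radical_eq (torsionExact_ofList (exact_injectiveDiff P)
      (F.map (setOne K S)) ?_) ?_
    · rw [List.length_map]
      lia
    · rw [Ideal.map_ofList] at hrad
      rw [← map_setOne_squarefreeIdeal]
      exact hrad

end LowerBound

section AraRank

theorem araRank_eq {R : Type} [CommRing R] {J : Ideal R} {s : ℕ}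
    (hlower : ∀ F : List R, (Ideal.ofList F).radical = J.radical → s ≤ F.length)
    (hupper : AraLEMod J 0 s) : araRank J = s := by
  have hrange {n : ℕ} (f : Fin n → R) : Ideal.ofList (List.ofFn f) = Ideal.span (Set.range f) := by
    simp only [Ideal.ofList, List.mem_ofFn', Set.mem_range]
    rfl
  refine IsLeast.csInf_eq ⟨?_, fun n ⟨f, hf⟩ => ?_⟩
  · obtain ⟨F, hF, hrad⟩ := hupper.exists_radical_eq
    obtain rfl := hF.antisymm (hlower F hrad)
    exact ⟨F.get, by rw [← hrange, List.ofFn_get, hrad]⟩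
  · simpa using hlower (List.ofFn f) (by rw [hrange, hf])

end AraRank

section CycleCycle

open Nonfaces

theorem araRank_cycle_cycle {K V : Type} [CommRing K] [Nontrivial K] [IsNoetherianRing K]
    [Finite V] {c : V} {xs ys : List V} (h : (c :: xs ++ ys).Nodup) (hx : 2 ≤ xs.length)
    (hy : 2 ≤ ys.length) : araRank (squarefreeIdeal K (cycle c xs ⊔ cycle c ys)) =
      twoCycleRank (xs.length + 1) (ys.length + 1) := by
  refine araRank_eq (fun F => twoCycleRank_le_length h hx hy) (araLEMod_cycle_cycle hx hy ?_ ?_)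
  · exact Nat.le_add_right _ _
  · intro h₁ h₂
    rw [twoCycleRank, if_pos ⟨h₁, h₂⟩]

theorem projDim_cycle_cycle {K V : Type} [CommRing K] [Nontrivial K] [Finite V] {c : V}
    {xs ys : List V} (h : (c :: xs ++ ys).Nodup) (hx : 2 ≤ xs.length) (hy : 2 ≤ ys.length) :
    projDim (MvPolynomial V K)
        (MvPolynomial V K ⧸ squarefreeIdeal K (cycle c xs ⊔ cycle c ys)) =
      twoCycleRank (xs.length + 1) (ys.length + 1) := by
  obtain ⟨N, hN⟩ := exists_not_subsingleton_ext_cycle_cycle (K := K) h hx hy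
  refine projDim_eq (hasProjectiveDimensionLE_cycle_cycle h hx hy ?_ ?_) hN
  · exact Nat.le_add_right _ _
  · rw [twoCycleRank]
    split_ifs <;> lia

end CycleCycle

section VertexJoin

open Nonfaces

variable {K : Type*} [CommRing K] {V : Type*}

theorem squarefreeIdeal_edge {a b : V} (hab : a ≠ b) :
    squarefreeIdeal K (edge a b) = Ideal.span {X a * X b} := by
  refine le_antisymm (fun p hp => ?_)
    ((Ideal.span_singleton_le_iff_mem _).2 (X_mul_X_mem_squarefreeIdeal (by simp)))
  rw [edge, squarefreeIdeal_inf, squarefreeIdeal_var, Ideal.mem_inf,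
    Ideal.mem_span_singleton] at hp
  obtain ⟨⟨q, rfl⟩, hb⟩ := hp
  have hq : q ∈ (squarefreeIdeal K (var b)).colon {X a} := by
    rwa [Submodule.mem_colon_singleton, smul_eq_mul, mul_comm]
  rw [colon_X_squarefreeIdeal, var_link (by simpa using hab.symm), squarefreeIdeal_var,
    Ideal.mem_span_singleton] at hq
  exact Ideal.mem_span_singleton.2 (mul_dvd_mul_left _ hq)

theorem squarefreeIdeal_path_map_range' {f : ℕ → V} {s k : ℕ}
    (hf : ∀ j ∈ Set.Ico s (s + k), f j ≠ f (j + 1)) :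
    squarefreeIdeal K (path ((List.range' s (k + 1)).map f)) =
      Ideal.span ((fun j => X (f j) * X (f (j + 1))) '' Set.Ico s (s + k)) := by
  induction k generalizing s with
  | zero =>
    rw [List.range'_succ, List.range'_zero, List.map_singleton, path_singleton,
      squarefreeIdeal_bot, add_zero, Set.Ico_self, Set.image_empty, Ideal.span_empty]
  | succ k ih =>
    have hIco : Set.Ico s (s + (k + 1)) = insert s (Set.Ico (s + 1) (s + 1 + k)) := by
      ext j
      simp only [Set.mem_Ico, Set.mem_insert_iff]
      lia
    rw [hIco] at hf ⊢
    obtain ⟨hs, hf⟩ := by simpa only [Set.forall_mem_insert] using hf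
    rw [List.range'_succ, List.range'_succ, List.map_cons, List.map_cons, path_cons_cons,
      ← List.map_cons, ← List.range'_succ, squarefreeIdeal_sup, ih hf, squarefreeIdeal_edge hs,
      Set.image_insert_eq, Ideal.span_insert]

theorem squarefreeIdeal_path_map_range'_concat {f : ℕ → V} {s k : ℕ} {c : V}
    (hf : ∀ j ∈ Set.Ico s (s + k), f j ≠ f (j + 1)) (hc : f (s + k) ≠ c) :
    squarefreeIdeal K (path ((List.range' s (k + 1)).map f ++ [c])) =
      Ideal.span ((fun j => X (f j) * X (f (j + 1))) '' Set.Ico s (s + k)) ⊔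
        Ideal.span {X (f (s + k)) * X c} := by
  rw [← squarefreeIdeal_path_map_range' hf, ← squarefreeIdeal_edge hc, ← squarefreeIdeal_sup,
    List.range'_1_concat, List.map_append, List.append_assoc, List.map_singleton,
    List.singleton_append, path_append_pair]

theorem natCast_zmod_injOn (N : ℕ) : Set.InjOn (Nat.cast : ℕ → ZMod N) (Set.Iio N) := by
  intro i hi j hj h
  rwa [ZMod.natCast_eq_natCast_iff', Nat.mod_eq_of_lt hi, Nat.mod_eq_of_lt hj] at h

/-- The vertices of the cycle `Cₙ` of `vertexJoinIdeal`, other than `0`. -/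
def firstCycle (n m : ℕ) : List (ZMod (n + m - 1)) :=
  (List.range' 1 (n - 1)).map Nat.cast

/-- The vertices of the cycle `C_m` of `vertexJoinIdeal`, other than `0`. -/
def secondCycle (n m : ℕ) : List (ZMod (n + m - 1)) :=
  (List.range' n (m - 1)).map Nat.cast

theorem cons_firstCycle (n m : ℕ) :
    0 :: firstCycle n m = (List.range' 0 (n - 1 + 1)).map Nat.cast := by
  rw [List.range'_succ, List.map_cons, Nat.cast_zero, zero_add, firstCycle]

theorem nodup_vertexJoin {n m : ℕ} (hn : 1 ≤ n) (hm : 1 ≤ m) :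
    (0 :: firstCycle n m ++ secondCycle n m).Nodup := by
  have hlist : List.range' 0 (n - 1 + 1) ++ List.range' n (m - 1) = List.range' 0 (n + m - 1) := by
    simpa [Nat.sub_add_cancel hn, ← Nat.add_sub_assoc hm] using
      List.range'_append_1 (s := 0) (m := n) (n := m - 1)
  rw [cons_firstCycle, secondCycle, ← List.map_append, hlist]
  exact List.Nodup.map_on (fun i hi j hj => natCast_zmod_injOn _ (by simpa using hi)
    (by simpa using hj)) List.nodup_range'

variable {n m : ℕ}

theorem length_firstCycle_add_one (hn : 1 ≤ n) : (firstCycle n m).length + 1 = n := by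
  rw [firstCycle, List.length_map, List.length_range', Nat.sub_add_cancel hn]

theorem length_secondCycle_add_one (hm : 1 ≤ m) : (secondCycle n m).length + 1 = m := by
  rw [secondCycle, List.length_map, List.length_range', Nat.sub_add_cancel hm]

theorem natCast_zmod_ne {N i j : ℕ} (hi : i < N) (hj : j < N) (hij : i ≠ j) : (i : ZMod N) ≠ j :=
  (natCast_zmod_injOn N).ne hi hj hij

theorem natCast_zmod_ne_zero {N i : ℕ} (hi : i < N) (hi₀ : i ≠ 0) : (i : ZMod N) ≠ 0 := by
  rw [← Nat.cast_zero]
  exact natCast_zmod_ne hi (by lia) hi₀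

theorem squarefreeIdeal_cycle_firstCycle (hn : 2 ≤ n) (hm : 1 ≤ m) :
    squarefreeIdeal K (cycle 0 (firstCycle n m)) =
      Ideal.span ((fun j : ℕ => X (j : ZMod (n + m - 1)) * X ((j + 1 : ℕ) : ZMod (n + m - 1))) ''
        Set.Iio (n - 1)) ⊔ Ideal.span {X ((n - 1 : ℕ) : ZMod (n + m - 1)) * X 0} := by
  rw [cycle, cons_firstCycle, squarefreeIdeal_path_map_range'_concat, zero_add,
    show Set.Ico 0 (n - 1) = Set.Iio (n - 1) from Set.Ico_bot]
  · intro j hj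
    have hj : j < n - 1 := by simpa using hj
    exact natCast_zmod_ne (by lia) (by lia) (by lia)
  · exact natCast_zmod_ne_zero (by lia) (by lia)

theorem squarefreeIdeal_cycle_secondCycle (hn : 1 ≤ n) (hm : 2 ≤ m) :
    squarefreeIdeal K (cycle 0 (secondCycle n m)) =
      Ideal.span {X 0 * X (n : ZMod (n + m - 1))} ⊔ (
      Ideal.span ((fun j : ℕ => X (j : ZMod (n + m - 1)) * X ((j + 1 : ℕ) : ZMod (n + m - 1))) ''
        Set.Ico n (n + m - 2)) ⊔ Ideal.span {X ((n + m - 2 : ℕ) : ZMod (n + m - 1)) * X 0}) := by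
  have hcons : path (0 :: secondCycle n m ++ [0]) =
      edge 0 (n : ZMod (n + m - 1)) ⊔ path (secondCycle n m ++ [0]) := by
    rw [secondCycle, show m - 1 = m - 2 + 1 by lia, List.range'_succ]
    rfl
  have hlast : n + m - 2 = n + (m - 2) := by lia
  rw [cycle, hcons, squarefreeIdeal_sup, squarefreeIdeal_edge, secondCycle,
    show m - 1 = m - 2 + 1 by lia, squarefreeIdeal_path_map_range'_concat, hlast]
  · intro j hj
    have hj : n ≤ j ∧ j < n + (m - 2) := hj
    exact natCast_zmod_ne (by lia) (by lia) (by lia)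
  · exact natCast_zmod_ne_zero (by lia) (by lia)
  · exact (natCast_zmod_ne_zero (by lia) (by lia)).symm

theorem vertexJoinIdeal_eq (K : Type) [Field K] (hn : 2 ≤ n) (hm : 2 ≤ m) :
    vertexJoinIdeal K n m =
      squarefreeIdeal K (cycle 0 (firstCycle n m) ⊔ cycle 0 (secondCycle n m)) := by
  rw [squarefreeIdeal_sup, squarefreeIdeal_cycle_firstCycle hn (by lia),
    squarefreeIdeal_cycle_secondCycle (by lia) hm, vertexJoinIdeal]
  simp only [Ideal.span_union, sup_assoc]

theorem twoCycleRank_eq (hn : 3 ≤ n) (hm : 3 ≤ m) : twoCycleRank n m =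
    if (n + m - 1) % 3 = 1 then (2 * (n + m - 1) + 1) / 3
      else if (n + m - 1) % 3 = 0 then 2 * (n + m - 1) / 3
      else if m % 3 = 0 then (2 * (n + m - 1) + 2) / 3
      else (2 * (n + m - 1) - 1) / 3 := by
  rw [twoCycleRank]
  split_ifs <;> lia

end VertexJoin

/-- For the graph `G` obtained by joining two cycles `Cₙ` and `C_m` (`n, m ≥ 3`) at a
single common vertex, with `N = n + m - 1` vertices, `ara I(G) = pd_R R/I(G)`, and the
common value is `(2N+1)/3` if `N ≡ 1`, `2N/3` if `N ≡ 0`, and, for `N ≡ 2 (mod 3)`,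
`(2N+2)/3` when `3 ∣ m` (equivalently when `3 ∣ n` and `3 ∣ m`) and `(2N-1)/3`
otherwise. -/
theorem vertex_join_ara_eq_pd (K : Type) [Field K] (n m : ℕ) (hn : 3 ≤ n) (hm : 3 ≤ m) :
    araRank (vertexJoinIdeal K n m) =
        (if (n + m - 1) % 3 = 1 then (2 * (n + m - 1) + 1) / 3
          else if (n + m - 1) % 3 = 0 then 2 * (n + m - 1) / 3
          else if m % 3 = 0 then (2 * (n + m - 1) + 2) / 3
          else (2 * (n + m - 1) - 1) / 3) ∧
      projDim (MvPolynomial (ZMod (n + m - 1)) K)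
          (MvPolynomial (ZMod (n + m - 1)) K ⧸ vertexJoinIdeal K n m) =
        ((araRank (vertexJoinIdeal K n m) : ℕ) : ℕ∞) := by
  have : NeZero (n + m - 1) := ⟨by lia⟩
  have hnodup := nodup_vertexJoin (n := n) (m := m) (by lia) (by lia)
  have hx : (firstCycle n m).length + 1 = n := length_firstCycle_add_one (by lia)
  have hy : (secondCycle n m).length + 1 = m := length_secondCycle_add_one (by lia)
  have hara := araRank_cycle_cycle (K := K) hnodup (by lia) (by lia)
  have hpd := projDim_cycle_cycle (K := K) hnodup (by lia) (by lia)
  rw [vertexJoinIdeal_eq K (by lia) (by lia), hpd, hara, hx, hy]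
  exact ⟨twoCycleRank_eq hn hm, rfl⟩
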